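/- arXiv:1712.10124 — 13 statements merged into one kernel-verified Lean document; each statement's English description precedes it below -/
import Mathlib

section
/- Let h be a positive integer, let m : ℕ → ℕ be any function, and let C(X) := ∏_{d | h} Φ_d(X)^{m(h/d)} ∈ ℂ[X], where Φ_d is the d-th cyclotomic polynomial. Then for every q ∈ ℂ with q^h ≠ 1, the logarithmic derivative of C satisfies C′(q)/C(q) = ∑_{d | h} m(h/d) · ( ∑_{j=1}^{d} c_d(j) q^{j-1} ) / (q^d − 1), where c_d(j) := ∑_{ζ} ζ^j is the Ramanujan sum, the sum running over all primitive d-th roots of unity ζ in ℂ. -/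
open Polynomial in
theorem aux_prod {ι : Type*} (s : Finset ι) (f : ι → ℂ[X]) (q : ℂ)
    (hf : ∀ i ∈ s, (f i).eval q ≠ 0) :
    (derivative (∏ i ∈ s, f i)).eval q / (∏ i ∈ s, f i).eval q =
      ∑ i ∈ s, (derivative (f i)).eval q / (f i).eval q := by
  classical
  induction s using Finset.induction_on with
  | empty => simp
  | insert a s ha ih =>
    have h1 := hf a (Finset.mem_insert_self a s)
    have h2 : (∏ i ∈ s, f i).eval q ≠ 0 := by
      rw [eval_prod]
      exact Finset.prod_ne_zero_iff.2 fun i hi => hf i (Finset.mem_insert_of_mem hi)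
    rw [Finset.prod_insert ha, Finset.sum_insert ha,
      ← ih fun i hi => hf i (Finset.mem_insert_of_mem hi), derivative_mul, eval_add, eval_mul,
      eval_mul, eval_mul]
    field_simp

open Polynomial in
theorem aux_pow (f : ℂ[X]) (n : ℕ) (q : ℂ) (hf : f.eval q ≠ 0) :
    (derivative (f ^ n)).eval q / (f ^ n).eval q =
      n * ((derivative f).eval q / f.eval q) := by
  have := aux_prod (Finset.range n) (fun _ => f) q (fun _ _ => hf)
  simpa using this

open Polynomial in
theorem aux_cyc (d : ℕ) (hd : 0 < d) (q : ℂ) (hq : q ^ d ≠ 1) :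
    (cyclotomic d ℂ).eval q ≠ 0 ∧
    (derivative (cyclotomic d ℂ)).eval q / (cyclotomic d ℂ).eval q =
      (∑ j ∈ Finset.Icc 1 d, (∑ ζ ∈ primitiveRoots d ℂ, ζ ^ j) * q ^ (j - 1)) / (q ^ d - 1) := by
  have hne : ∀ ζ ∈ primitiveRoots d ℂ, (X - C ζ : ℂ[X]).eval q ≠ 0 := by
    intro ζ hζ h0
    have hp := (isPrimitiveRoot_of_mem_primitiveRoots hζ).pow_eq_one
    rw [eval_sub, eval_X, eval_C, sub_eq_zero] at h0
    exact hq (h0 ▸ hp)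
  rw [cyclotomic_eq_prod_X_sub_primitiveRoots (Complex.isPrimitiveRoot_exp d hd.ne')]
  refine ⟨?_, ?_⟩
  · rw [eval_prod]
    exact Finset.prod_ne_zero_iff.2 hne
  rw [aux_prod _ _ _ hne]
  have hinv : ∀ j, ∑ ζ ∈ primitiveRoots d ℂ, ζ ^ j = ∑ ζ ∈ primitiveRoots d ℂ, (ζ⁻¹) ^ j := by
    intro j
    have hm : ∀ ζ ∈ primitiveRoots d ℂ, ζ⁻¹ ∈ primitiveRoots d ℂ := fun ζ hζ =>
      (mem_primitiveRoots hd).2 (isPrimitiveRoot_of_mem_primitiveRoots hζ).inv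
    exact Finset.sum_bij' (fun ζ _ => ζ⁻¹) (fun ζ _ => ζ⁻¹) hm hm (by simp) (by simp) (by simp)
  simp_rw [hinv, Finset.sum_mul]
  rw [Finset.sum_comm, Finset.sum_div]
  refine Finset.sum_congr rfl fun ζ hζ => ?_
  have hp := isPrimitiveRoot_of_mem_primitiveRoots hζ
  have h0 : ζ ≠ 0 := hp.ne_zero hd.ne'
  have h1 := hne ζ hζ
  have h2 : q ^ d - 1 ≠ 0 := sub_ne_zero.2 hq
  simp only [eval_sub, eval_X, eval_C, derivative_sub, derivative_X, derivative_C, eval_one,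
    eval_zero, sub_zero] at h1 ⊢
  rw [div_eq_div_iff h1 h2, one_mul]
  have h3 : ∑ j ∈ Finset.Icc 1 d, (ζ⁻¹) ^ j * q ^ (j - 1)
      = ∑ i ∈ Finset.range d, q ^ i * ζ ^ (d - 1 - i) := by
    rw [Finset.range_eq_Ico, ← Finset.Ico_add_one_right_eq_Icc,
      Finset.sum_Ico_eq_sum_range, Finset.range_eq_Ico]
    refine Finset.sum_congr (by simp) fun i hi => ?_
    have hi' : i < d := by simpa using hi
    have e : ζ ^ (d - 1 - i) * ζ ^ (1 + i) = 1 := by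
      rw [← pow_add, ← hp.pow_eq_one]; congr 1; omega
    rw [inv_pow, ← eq_inv_of_mul_eq_one_left e, Nat.add_sub_cancel_left, mul_comm]
  rw [h3, (Commute.all q ζ).geom_sum₂_mul, hp.pow_eq_one]

/-- For `C(X) = ∏_{d ∣ h} Φ_d(X)^{m(h/d)}` and `q` with `q^h ≠ 1`,
`C′(q)/C(q) = ∑_{d ∣ h} m(h/d) · (∑_{j=1}^{d} c_d(j) q^{j-1}) / (q^d − 1)`,
where `c_d(j) = ∑_{ζ primitive d-th root of unity} ζ^j` is the Ramanujan sum. -/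
theorem stmt_0 (h : ℕ) (hh : 0 < h) (m : ℕ → ℕ)
    (C : Polynomial ℂ)
    (hC : C = ∏ d ∈ h.divisors, (Polynomial.cyclotomic d ℂ) ^ m (h / d))
    (q : ℂ) (hq : q ^ h ≠ 1) :
    (Polynomial.derivative C).eval q / C.eval q =
      ∑ d ∈ h.divisors, (m (h / d) : ℂ) *
        ((∑ j ∈ Finset.Icc 1 d, (∑ ζ ∈ primitiveRoots d ℂ, ζ ^ j) * q ^ (j - 1)) /
          (q ^ d - 1)) := by
  have key : ∀ d ∈ h.divisors, q ^ d ≠ 1 := by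
    intro d hd h1
    obtain ⟨k, rfl⟩ := Nat.dvd_of_mem_divisors hd
    exact hq (by rw [pow_mul, h1, one_pow])
  have hc := fun d hd => aux_cyc d (Nat.pos_of_mem_divisors hd) q (key d hd)
  rw [hC, aux_prod]
  · refine Finset.sum_congr rfl fun d hd => ?_
    rw [aux_pow _ _ _ (hc d hd).1, (hc d hd).2]
  · intro d hd
    rw [Polynomial.eval_pow]
    exact pow_ne_zero _ (hc d hd).1
end

section
/- Let h ≥ 3 be an integer, ε := exp(2πi/h) ∈ ℂ, let k₁ < k₂ < … < k_{φ(h)} be the integers in [1, h−1] coprime to h (so that ε^{k₁}, …, ε^{k_{φ(h)}} are the primitive h-th roots of unity), and let F : ℂ → ℂ be any function. Let L*[F] denote the unique polynomial of degree < φ(h) with L*[F](ε^{k_i}) = F(ε^{k_i}) for all i (the Lagrange interpolation polynomial of F at the primitive h-th roots of unity). Define the (φ(h)+1)×(φ(h)+1) complex matrix M(q) by: M(q)₀₀ = 0; the remaining entries of the first row are M(q)₀,ⱼ = q^{j−1} for j = 1, …, φ(h); the remaining entries of the first column are M(q)ᵢ,₀ = ∑_{l=1}^{φ(h)} ε^{k_l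 (i−1)} F(ε^{k_l}) for i = 1, …, φ(h); and the remaining φ(h)×φ(h) block is C with Cᵢⱼ = c_h(i+j−2), where c_h(j) is the Ramanujan sum. Then for every q ∈ ℂ, L*[F](q) = ( ∏_{p | h, p prime} p^{φ(h)/(p−1)} ) / ( (−1)^{1+φ(h)/2} h^{φ(h)} ) · det M(q). -/
open Polynomial Matrix

lemma det_ram_aux (h : ℕ) (hh : 3 ≤ h) (K : Type) [Field K] [CharZero K] [NeZero h]
    [IsCyclotomicExtension {h} ℚ K] :
    (Matrix.of (fun (i : Fin h.totient) (j : Fin h.totient) =>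
        ∑ ζ ∈ primitiveRoots h ℂ, ζ ^ ((i : ℕ) + (j : ℕ)))).det =
      (-1 : ℂ) ^ (h.totient / 2) * ((h : ℂ) ^ h.totient /
        ∏ p ∈ h.primeFactors, (p : ℂ) ^ (h.totient / (p - 1))) := by
  have : NumberField K := IsCyclotomicExtension.numberField {h} ℚ K
  have hζ := IsCyclotomicExtension.zeta_spec h ℚ K
  have hirr := cyclotomic.irreducible_rat (NeZero.pos h)
  let b := hζ.integralPowerBasis.basis.reindex (finCongr hζ.integralPowerBasis_dim)
  have hd := IsCyclotomicExtension.Rat.discr h K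
  rw [← NumberField.discr_eq_discr _ b] at hd
  have hd2 := Algebra.discr_localizationLocalization (Rₘ := ℚ) ℤ (nonZeroDivisors ℤ) K b
  rw [hd, Algebra.discr_def] at hd2
  have hd3 := congrArg (algebraMap ℚ ℂ) hd2
  rw [RingHom.map_det] at hd3
  have hm : (algebraMap ℚ ℂ).mapMatrix (Algebra.traceMatrix ℚ
      (b.localizationLocalization ℚ (nonZeroDivisors ℤ) K)) =
      Matrix.of (fun (i : Fin h.totient) (j : Fin h.totient) =>
        ∑ ζ ∈ primitiveRoots h ℂ, ζ ^ ((i : ℕ) + (j : ℕ))) := by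
    ext i j
    have hb : ∀ i, b.localizationLocalization ℚ (nonZeroDivisors ℤ) K i =
        (IsCyclotomicExtension.zeta h ℚ K) ^ (i : ℕ) := by
      intro i
      rw [Module.Basis.localizationLocalization_apply]
      simp [b]
      rfl
    rw [RingHom.mapMatrix_apply, Matrix.map_apply, Algebra.traceMatrix_apply,
      Algebra.traceForm_apply, trace_eq_sum_embeddings ℂ, hb, hb, ← pow_add, Matrix.of_apply,
      ← Finset.sum_coe_sort (primitiveRoots h ℂ)]
    refine Fintype.sum_equiv (hζ.embeddingsEquivPrimitiveRoots ℂ hirr) _ _ fun σ => ?_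
    rw [map_pow, IsPrimitiveRoot.embeddingsEquivPrimitiveRoots_apply_coe]
  rw [hm] at hd3
  rw [hd3]
  have hdvd := Nat.prod_primeFactors_pow_totient_ediv_dvd (NeZero.pos h)
  have hne : (((∏ p ∈ h.primeFactors, p ^ (h.totient / (p - 1)) : ℕ)) : ℂ) ≠ 0 := by
    rw [Nat.cast_ne_zero, Finset.prod_ne_zero_iff]
    intro p hp
    exact pow_ne_zero _ (Nat.prime_of_mem_primeFactors hp).ne_zero
  have := Nat.cast_div (K := ℂ) hdvd hne
  push_cast at this
  rw [← this]
  have h2 : (h : ℤ) ^ h.totient / ((∏ p ∈ h.primeFactors, p ^ (h.totient / (p - 1)) : ℕ) : ℤ) =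
    ((h ^ h.totient / ∏ p ∈ h.primeFactors, p ^ (h.totient / (p - 1)) : ℕ) : ℤ) := by
    norm_cast
  rw [h2]
  generalize h ^ h.totient / ∏ p ∈ h.primeFactors, p ^ (h.totient / (p - 1)) = m
  simp

lemma det_ram (h : ℕ) (hh : 3 ≤ h) :
    (Matrix.of (fun (i : Fin h.totient) (j : Fin h.totient) =>
        ∑ ζ ∈ primitiveRoots h ℂ, ζ ^ ((i : ℕ) + (j : ℕ)))).det =
      (-1 : ℂ) ^ (h.totient / 2) * ((h : ℂ) ^ h.totient /
        ∏ p ∈ h.primeFactors, (p : ℂ) ^ (h.totient / (p - 1))) := by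
  have : NeZero h := ⟨by omega⟩
  have : IsCyclotomicExtension {h} ℚ (CyclotomicField h ℚ) :=
    CyclotomicField.isCyclotomicExtension h ℚ
  exact det_ram_aux h hh (CyclotomicField h ℚ)

/-- Determinant formula for the Lagrange interpolation polynomial `L*[F]`
of a function `F : ℂ → ℂ` at the primitive `h`-th roots of unity (`h ≥ 3`):
`L*[F](q) = (∏_{p ∣ h prime} p^{φ(h)/(p−1)}) / ((−1)^{1+φ(h)/2} h^{φ(h)}) · det M(q)`,
where `M(q)` is the `(φ(h)+1)×(φ(h)+1)` matrix with `M₀₀ = 0`, the rest of the first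
row being `q^{j−1}`, the rest of the first column being `∑_ζ ζ^{i−1} F(ζ)` (sum over
primitive `h`-th roots of unity, i.e. `∑_l ε^{k_l(i−1)} F(ε^{k_l})`), and the remaining
`φ(h)×φ(h)` block being `C` with `C_{ij} = c_h(i+j−2)` (Ramanujan sums). -/
theorem stmt_3 (h : ℕ) (hh : 3 ≤ h) (F : ℂ → ℂ)
    (L : Polynomial ℂ) (hdeg : L.degree < (h.totient : WithBot ℕ))
    (hinterp : ∀ ζ ∈ primitiveRoots h ℂ, L.eval ζ = F ζ)
    (M : ℂ → Matrix (Fin 1 ⊕ Fin h.totient) (Fin 1 ⊕ Fin h.totient) ℂ)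
    (hM : ∀ q : ℂ, M q = Matrix.fromBlocks
      (fun (_ : Fin 1) (_ : Fin 1) => (0 : ℂ))
      (fun (_ : Fin 1) (j : Fin h.totient) => q ^ (j : ℕ))
      (fun (i : Fin h.totient) (_ : Fin 1) =>
        ∑ ζ ∈ primitiveRoots h ℂ, ζ ^ (i : ℕ) * F ζ)
      (fun (i : Fin h.totient) (j : Fin h.totient) =>
        ∑ ζ ∈ primitiveRoots h ℂ, ζ ^ ((i : ℕ) + (j : ℕ))))
    (q : ℂ) :
    L.eval q =
      (∏ p ∈ h.primeFactors, (p : ℂ) ^ (h.totient / (p - 1))) /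
        ((-1 : ℂ) ^ (1 + h.totient / 2) * (h : ℂ) ^ h.totient) * (M q).det := by
  have hC := det_ram h hh
  rw [hM]
  set C : Matrix (Fin h.totient) (Fin h.totient) ℂ :=
    Matrix.of (fun (i : Fin h.totient) (j : Fin h.totient) =>
        ∑ ζ ∈ primitiveRoots h ℂ, ζ ^ ((i : ℕ) + (j : ℕ))) with hCdef
  change _ = _ * (Matrix.fromBlocks
      (Matrix.of (fun (_ : Fin 1) (_ : Fin 1) => (0 : ℂ)))
      (Matrix.of (fun (_ : Fin 1) (j : Fin h.totient) => q ^ (j : ℕ)))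
      (Matrix.of (fun (i : Fin h.totient) (_ : Fin 1) =>
        ∑ ζ ∈ primitiveRoots h ℂ, ζ ^ (i : ℕ) * F ζ)) C).det
  have hP : (∏ p ∈ h.primeFactors, (p : ℂ) ^ (h.totient / (p - 1))) ≠ 0 := by
    rw [Finset.prod_ne_zero_iff]
    intro p hp
    exact pow_ne_zero _ (Nat.cast_ne_zero.2 (Nat.prime_of_mem_primeFactors hp).ne_zero)
  have hh0 : (h : ℂ) ^ h.totient ≠ 0 := pow_ne_zero _ (Nat.cast_ne_zero.2 (by omega))
  have hs : (-1 : ℂ) ^ (h.totient / 2) ≠ 0 := pow_ne_zero _ (by norm_num)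
  have hdet : IsUnit C.det := by
    rw [hC]
    exact IsUnit.mk0 _ (mul_ne_zero hs (div_ne_zero hh0 hP))
  have hLe : ∀ x : ℂ, L.eval x = ∑ j : Fin h.totient, L.coeff j * x ^ (j : ℕ) := by
    intro x
    have hL0 : L.natDegree < h.totient := by
      by_cases h0 : L = 0
      · subst h0
        simpa using Nat.totient_pos.2 (by omega)
      · exact (Polynomial.natDegree_lt_iff_degree_lt h0).2 hdeg
    rw [Polynomial.eval_eq_sum_range' hL0, Finset.sum_range]
  let : Invertible C.det := hdet.invertible
  let := Matrix.invertibleOfDetInvertible C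
  have hb : Matrix.of (fun (i : Fin h.totient) (_ : Fin 1) =>
        ∑ ζ ∈ primitiveRoots h ℂ, ζ ^ (i : ℕ) * F ζ) =
      C * Matrix.of (fun (j : Fin h.totient) (_ : Fin 1) => L.coeff j) := by
    ext i k
    rw [Matrix.mul_apply]
    simp only [hCdef, Matrix.of_apply, Finset.sum_mul]
    rw [Finset.sum_comm]
    refine Finset.sum_congr rfl fun ζ hζ => ?_
    rw [← hinterp ζ hζ, hLe, Finset.mul_sum]
    refine Finset.sum_congr rfl fun j _ => ?_
    ring
  rw [hb, Matrix.det_fromBlocks₂₂, Matrix.mul_assoc, Matrix.invOf_mul_cancel_left,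
    Matrix.det_fin_one, Matrix.sub_apply, Matrix.mul_apply, hC]
  have : ∑ j : Fin h.totient, Matrix.of (fun (_ : Fin 1) (j : Fin h.totient) => q ^ (j : ℕ)) 0 j *
      Matrix.of (fun (j : Fin h.totient) (_ : Fin 1) => L.coeff j) j 0 = L.eval q := by
    rw [hLe]
    exact Finset.sum_congr rfl fun j _ => mul_comm _ _
  rw [this, pow_add, Matrix.of_apply]
  field_simp
  ring
end

section
/- Let h be a positive integer, ε := exp(2πi/h) ∈ ℂ, and let a : ℕ → ℂ satisfy a(k) = a(gcd(k, h)) for every natural number k (with gcd(0, h) = h). Set A(q) := ∑_{k=0}^{h−1} a(k) q^k. Then for every q ∈ ℂ with q^h ≠ 1: A(q)/(1 − q^h) = (1/h) ∑_{d | h} A(ε^{h/d}) · ( ∑_{k=0}^{d−1} c_d(k) q^k ) / (1 − q^d), where c_d(k) := ∑_{ζ} ζ^k is the Ramanujan sum, the sum running over all primitive d-th roots of unity ζ in ℂ. -/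
theorem aux_period (a : ℕ → ℂ) (h m : ℕ) (hh : 0 < h) (ha : ∀ k : ℕ, a k = a (Nat.gcd k h))
    (hm : m.Coprime h) (z : ℂ) (hz : z ^ h = 1) :
    ∑ k ∈ Finset.range h, a k * (z ^ m) ^ k = ∑ k ∈ Finset.range h, a k * z ^ k := by
  have hmaps : Set.MapsTo (fun k => m * k % h) (Finset.range h : Set ℕ) (Finset.range h : Set ℕ) := by
    intro k _
    simpa using Nat.mod_lt _ hh
  have hinj : Set.InjOn (fun k => m * k % h) (Finset.range h : Set ℕ) := by
    intro x hx y hy hxy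
    simp at hx hy
    have h1 : m * x ≡ m * y [MOD h] := hxy
    have h2 := Nat.ModEq.cancel_left_of_coprime (by rw [Nat.gcd_comm]; exact hm) h1
    exact Nat.ModEq.eq_of_lt_of_lt h2 hx hy
  refine Finset.sum_nbij (fun k => m * k % h) (fun k hk => hmaps hk) hinj
    (Finset.surjOn_of_injOn_of_card_le _ hmaps hinj le_rfl) ?_
  intro k _
  rw [← pow_mul, ← pow_eq_pow_mod _ hz, ha (m * k % h), ha k]
  congr 2
  rw [(Nat.mod_modEq _ h).gcd_eq, Nat.Coprime.gcd_mul_left_cancel k hm]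

theorem aux_lift (h d : ℕ) (hh : 0 < h) (hd : d ∣ h) (e z : ℂ) (he : IsPrimitiveRoot e d)
    (hz : IsPrimitiveRoot z d) : ∃ m : ℕ, m.Coprime h ∧ z = e ^ m := by
  have : NeZero h := ⟨hh.ne'⟩
  have : NeZero d := ⟨(Nat.pos_of_dvd_of_pos hd hh).ne'⟩
  obtain ⟨i, _, hi, rfl⟩ := (he.isPrimitiveRoot_iff).1 hz
  obtain ⟨u, hu⟩ := ZMod.unitsMap_surjective hd (ZMod.unitOfCoprime i hi)
  refine ⟨(u : ZMod h).val, ZMod.val_coe_unit_coprime u, ?_⟩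
  have h1 : ((u : ZMod h).val : ZMod d) = (i : ZMod d) := by
    have := congrArg (fun v : (ZMod d)ˣ => (v : ZMod d)) hu
    simpa [ZMod.unitsMap_def, ZMod.natCast_val] using this
  have h2 := (ZMod.natCast_eq_natCast_iff' _ _ _).1 h1
  rw [pow_eq_pow_mod i he.pow_eq_one, pow_eq_pow_mod (ZMod.val _) he.pow_eq_one, h2]

theorem aux_geom (d : ℕ) (w : ℂ) (hw : w ^ d ≠ 1) :
    (∑ k ∈ Finset.range d, w ^ k) / (1 - w ^ d) = (1 - w)⁻¹ := by
  have h1 : w ≠ 1 := by rintro rfl; simp at hw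
  have := geom_sum_mul_neg w d
  have h2 : 1 - w ≠ 0 := sub_ne_zero.2 h1.symm
  have h3 : 1 - w ^ d ≠ 0 := sub_ne_zero.2 hw.symm
  rw [div_eq_iff h3, ← this]
  field_simp

theorem aux_orth (h n : ℕ) (hh : 0 < h) (e : ℂ) (he : IsPrimitiveRoot e h) :
    ∑ z ∈ Polynomial.nthRootsFinset h (1 : ℂ), z ^ n = if h ∣ n then (h : ℂ) else 0 := by
  have hS : ∑ z ∈ Polynomial.nthRootsFinset h (1 : ℂ), z ^ n
      = ∑ i ∈ Finset.range h, (e ^ n) ^ i := by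
    symm
    refine Finset.sum_nbij (fun i => e ^ i) ?_ ?_ ?_ ?_
    · intro i _
      rw [Polynomial.mem_nthRootsFinset hh, ← pow_mul, mul_comm, pow_mul, he.pow_eq_one, one_pow]
    · intro x hx y hy hxy
      simp at hx hy
      exact he.pow_inj hx hy hxy
    · intro z hz
      have : NeZero h := ⟨hh.ne'⟩
      have hz' := (Polynomial.mem_nthRootsFinset hh _).1 (Finset.mem_coe.1 hz)
      obtain ⟨i, hi, rfl⟩ := he.eq_pow_of_pow_eq_one hz'
      exact ⟨i, by simpa using hi, rfl⟩
    · intro i _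
      rw [← pow_mul, ← pow_mul, mul_comm]
  rw [hS]
  split_ifs with hd
  · simp [(he.pow_eq_one_iff_dvd n).2 hd]
  · have h1 : e ^ n ≠ 1 := fun H => hd ((he.pow_eq_one_iff_dvd n).1 H)
    rw [geom_sum_eq h1, ← pow_mul, mul_comm, pow_mul, he.pow_eq_one]
    simp

theorem aux_coef (a : ℕ → ℂ) (h k : ℕ) (hk : k < h) (ha : ∀ k : ℕ, a k = a (Nat.gcd k h)) :
    ∑ j ∈ Finset.range h, a j * (if h ∣ j + k then (h : ℂ) else 0) = a k * h := by
  have hh : 0 < h := by omega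
  rw [Finset.sum_eq_single ((h - k) % h)]
  · have h1 : h ∣ (h - k) % h + k := by
      rw [Nat.dvd_iff_mod_eq_zero, Nat.mod_add_mod, Nat.sub_add_cancel hk.le, Nat.mod_self]
    rw [if_pos h1, ha k, ha ((h - k) % h)]
    congr 2
    rw [(Nat.mod_modEq _ h).gcd_eq, Nat.gcd_self_sub_left hk.le]
  · intro j hj hne
    rw [if_neg, mul_zero]
    intro hd
    apply hne
    simp at hj
    obtain ⟨c, hc⟩ := hd
    have : c < 2 := by nlinarith
    interval_cases c
    · have : k = 0 := by omega
      subst this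
      simp; omega
    · rw [Nat.mod_eq_of_lt] <;> omega
  · intro H
    exact absurd (Finset.mem_range.2 (Nat.mod_lt _ hh)) H

theorem stmt_4 (h : ℕ) (hh : 0 < h)
    (ε : ℂ) (hε : ε = Complex.exp (2 * Real.pi * Complex.I / h))
    (a : ℕ → ℂ) (ha : ∀ k : ℕ, a k = a (Nat.gcd k h))
    (A : ℂ → ℂ) (hA : ∀ q : ℂ, A q = ∑ k ∈ Finset.range h, a k * q ^ k)
    (q : ℂ) (hq : q ^ h ≠ 1) :
    A q / (1 - q ^ h) =
      (1 / (h : ℂ)) * ∑ d ∈ h.divisors, A (ε ^ (h / d)) *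
        ((∑ k ∈ Finset.range d, (∑ ζ ∈ primitiveRoots d ℂ, ζ ^ k) * q ^ k) /
          (1 - q ^ d)) := by
  have he : IsPrimitiveRoot ε h := hε ▸ Complex.isPrimitiveRoot_exp h hh.ne'
  have key : ∀ d ∈ h.divisors, A (ε ^ (h / d)) *
        ((∑ k ∈ Finset.range d, (∑ ζ ∈ primitiveRoots d ℂ, ζ ^ k) * q ^ k) /
          (1 - q ^ d)) = ∑ z ∈ primitiveRoots d ℂ, A z * (1 - z * q)⁻¹ := by
    intro d hd
    have hdh := Nat.dvd_of_mem_divisors hd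
    have hd0 : 0 < d := Nat.pos_of_mem_divisors hd
    have hed : IsPrimitiveRoot (ε ^ (h / d)) d :=
      he.pow hh (Nat.div_mul_cancel hdh).symm
    have hqd : q ^ d ≠ 1 := by
      intro H
      obtain ⟨c, rfl⟩ := hdh
      exact hq (by rw [pow_mul, H, one_pow])
    have h1 : ∑ k ∈ Finset.range d, (∑ ζ ∈ primitiveRoots d ℂ, ζ ^ k) * q ^ k
        = ∑ z ∈ primitiveRoots d ℂ, ∑ k ∈ Finset.range d, (z * q) ^ k := by
      rw [Finset.sum_comm]
      simp only [Finset.sum_mul, mul_pow]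
    rw [h1, Finset.sum_div, Finset.mul_sum]
    refine Finset.sum_congr rfl fun z hz => ?_
    have hz' := (mem_primitiveRoots hd0).1 hz
    obtain ⟨m, hm, hzm⟩ := aux_lift h d hh hdh _ z hed hz'
    have hAz : A z = A (ε ^ (h / d)) := by
      rw [hA, hA, hzm]
      refine aux_period a h m hh ha hm _ ?_
      rw [← pow_mul, mul_comm, pow_mul, he.pow_eq_one, one_pow]
    have h2 : (z * q) ^ d = q ^ d := by rw [mul_pow, hz'.pow_eq_one, one_mul]
    rw [hAz, ← aux_geom d (z * q) (by rwa [h2]), h2]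
  rw [Finset.sum_congr rfl key]
  have hU : ∑ d ∈ h.divisors, ∑ z ∈ primitiveRoots d ℂ, A z * (1 - z * q)⁻¹
      = ∑ z ∈ Polynomial.nthRootsFinset h (1 : ℂ), A z * (1 - z * q)⁻¹ := by
    classical
    rw [IsPrimitiveRoot.nthRoots_one_eq_biUnion_primitiveRoots, Finset.sum_biUnion]
    intro x _ y _ hxy
    exact IsPrimitiveRoot.disjoint hxy
  have hV : ∀ z ∈ Polynomial.nthRootsFinset h (1 : ℂ), A z * (1 - z * q)⁻¹
      = (∑ k ∈ Finset.range h, ∑ j ∈ Finset.range h, a j * z ^ (j + k) * q ^ k) / (1 - q ^ h) := by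
    intro z hz
    have hz' := (Polynomial.mem_nthRootsFinset hh _).1 hz
    have h2 : (z * q) ^ h = q ^ h := by rw [mul_pow, hz', one_mul]
    rw [← aux_geom h (z * q) (by rwa [h2]), h2, ← mul_div_assoc, hA, Finset.sum_mul_sum,
      Finset.sum_comm]
    congr 1
    refine Finset.sum_congr rfl fun k _ => Finset.sum_congr rfl fun j _ => ?_
    rw [pow_add, mul_pow]; ring
  have h0 : (h : ℂ) ≠ 0 := by exact_mod_cast hh.ne'
  rw [hU, Finset.sum_congr rfl hV, ← Finset.sum_div, ← mul_div_assoc]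
  congr 1
  rw [Finset.sum_comm, hA, Finset.mul_sum]
  refine Finset.sum_congr rfl fun k hk => ?_
  have h3 : ∑ z ∈ Polynomial.nthRootsFinset h (1 : ℂ), ∑ j ∈ Finset.range h,
      a j * z ^ (j + k) * q ^ k = a k * h * q ^ k := by
    rw [Finset.sum_comm, ← aux_coef a h k (Finset.mem_range.1 hk) ha, Finset.sum_mul]
    refine Finset.sum_congr rfl fun j _ => ?_
    rw [← aux_orth h (j + k) hh ε he, Finset.mul_sum, Finset.sum_mul]
  rw [h3]
  field_simp
end

section
/- Let h be a positive integer, ε := exp(2πi/h) ∈ ℂ, and let a : ℕ → ℂ satisfy a(k) = a(gcd(k, h)) for every natural number k (with gcd(0, h) = h). Set A(q) := ∑_{k=0}^{h−1} a(k) q^k. Then for every q ∈ ℂ with q^h ≠ 1: A(q)/(1 − q^h) = (1/h) ∑_{d | h} A(ε^{h/d}) · ∑_{d′ | d} d′ μ(d/d′) / (1 − q^{d′}), where μ is the Möbius function. -/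
open Polynomial in
lemma sum_roots_eq (n : ℕ) (hn : 0 < n) (ε : ℂ) (hε : IsPrimitiveRoot ε n) (f : ℂ → ℂ) :
    ∑ z ∈ nthRootsFinset n (1 : ℂ), f z = ∑ j ∈ Finset.range n, f (ε ^ j) := by
  have : NeZero n := ⟨hn.ne'⟩
  symm
  refine Finset.sum_bij (fun j _ => ε ^ j) ?_ ?_ ?_ ?_
  · intro j _
    rw [Polynomial.mem_nthRootsFinset hn, ← pow_mul, mul_comm, pow_mul, hε.pow_eq_one, one_pow]
  · intro i hi j hj H
    exact hε.pow_inj (Finset.mem_range.1 hi) (Finset.mem_range.1 hj) H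
  · intro z hz
    rw [Polynomial.mem_nthRootsFinset hn] at hz
    obtain ⟨i, hi, h⟩ := hε.eq_pow_of_pow_eq_one hz
    exact ⟨i, Finset.mem_range.2 hi, h⟩
  · intros; rfl

open Polynomial in
lemma partial_frac (n : ℕ) (hn : 0 < n) (a : ℕ → ℂ) (q : ℂ) (hq : q ^ n ≠ 1) :
    ∑ z ∈ nthRootsFinset n (1 : ℂ), (∑ k ∈ Finset.range n, a k * z ^ k) * (1 - z⁻¹ * q)⁻¹ =
      n * (∑ k ∈ Finset.range n, a k * q ^ k) / (1 - q ^ n) := by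
  have hq' : 1 - q ^ n ≠ 0 := sub_ne_zero.2 (Ne.symm hq)
  have hε := Complex.isPrimitiveRoot_exp n hn.ne'
  set ε := Complex.exp (2 * Real.pi * Complex.I / n)
  have hε0 : ε ≠ 0 := hε.ne_zero hn.ne'
  have h1 : ∀ z ∈ nthRootsFinset n (1 : ℂ),
      (∑ k ∈ Finset.range n, a k * z ^ k) * (1 - z⁻¹ * q)⁻¹ =
      (∑ k ∈ Finset.range n, ∑ m ∈ Finset.range n, a k * q ^ m * (z ^ k * (z⁻¹) ^ m)) / (1 - q ^ n) := by
    intro z hz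
    rw [Polynomial.mem_nthRootsFinset hn] at hz
    have hzq : (z⁻¹ * q) ^ n = q ^ n := by rw [mul_pow, inv_pow, hz]; simp
    have hne : 1 - z⁻¹ * q ≠ 0 := by
      intro h
      have : z⁻¹ * q = 1 := (sub_eq_zero.1 h).symm
      rw [this, one_pow] at hzq
      exact hq hzq.symm
    have hg := mul_neg_geom_sum (z⁻¹ * q) n
    rw [hzq] at hg
    rw [eq_div_iff hq', ← hg]
    rw [mul_assoc, inv_mul_cancel_left₀ hne, Finset.sum_mul_sum]
    refine Finset.sum_congr rfl fun k _ => Finset.sum_congr rfl fun m _ => ?_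
    rw [mul_pow]; ring
  rw [Finset.sum_congr rfl h1, ← Finset.sum_div]
  congr 1
  rw [Finset.sum_comm, Finset.mul_sum]
  refine Finset.sum_congr rfl fun k hk => ?_
  rw [Finset.sum_comm]
  rw [Finset.sum_eq_single_of_mem k hk]
  · rw [← Finset.mul_sum, sum_roots_eq n hn ε hε]
    have : ∀ j ∈ Finset.range n, (ε ^ j) ^ k * (ε ^ j)⁻¹ ^ k = 1 := by
      intro j _
      rw [← mul_pow, mul_inv_cancel₀ (pow_ne_zero _ hε0), one_pow]
    rw [Finset.sum_congr rfl this]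
    simp; ring
  · intro m hm hmk
    rw [← Finset.mul_sum, sum_roots_eq n hn ε hε]
    have : ∀ j ∈ Finset.range n, (ε ^ j) ^ k * (ε ^ j)⁻¹ ^ m = (ε ^ k * (ε ^ m)⁻¹) ^ j := by
      intro j _
      rw [mul_pow, ← pow_mul, ← pow_mul, inv_pow, inv_pow, ← pow_mul, ← pow_mul, mul_comm j k,
        mul_comm j m]
    rw [Finset.sum_congr rfl this]
    have hr : ε ^ k * (ε ^ m)⁻¹ ≠ 1 := by
      intro h
      rw [mul_inv_eq_one₀ (pow_ne_zero _ hε0)] at h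
      exact hmk (hε.pow_inj (Finset.mem_range.1 hk) (Finset.mem_range.1 hm) h).symm
    rw [geom_sum_eq hr, mul_pow, inv_pow, ← pow_mul, ← pow_mul, mul_comm k, mul_comm m, pow_mul,
      pow_mul, hε.pow_eq_one]
    simp

lemma A_unit (h : ℕ) (hh : 0 < h) (a : ℕ → ℂ) (ha : ∀ k : ℕ, a k = a (Nat.gcd k h))
    (z : ℂ) (hz : z ^ h = 1) (u : (ZMod h)ˣ) :
    ∑ k ∈ Finset.range h, a k * (z ^ (u : ZMod h).val) ^ k = ∑ k ∈ Finset.range h, a k * z ^ k := by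
  have : NeZero h := ⟨hh.ne'⟩
  have key : ∀ f : ℕ → ℂ, ∑ k ∈ Finset.range h, f k = ∑ x : ZMod h, f x.val := by
    intro f
    refine Finset.sum_bij' (fun k _ => (k : ZMod h)) (fun x _ => x.val) ?_ ?_ ?_ ?_ ?_
    · intros; simp
    · intro x _; exact Finset.mem_range.2 x.val_lt
    · intro k hk; exact ZMod.val_cast_of_lt (Finset.mem_range.1 hk)
    · intro x _; simp
    · intro k hk; rw [ZMod.val_cast_of_lt (Finset.mem_range.1 hk)]
  rw [key, key, ← Equiv.sum_comp u.mulLeft (fun x : ZMod h => a x.val * z ^ x.val)]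
  refine Finset.sum_congr rfl fun x _ => ?_
  have hv : (u.mulLeft x).val = ((u : ZMod h).val * x.val) % h := by
    simp [ZMod.val_mul]
  simp only [hv]
  congr 1
  · rw [ha x.val, ha (_ % h)]
    congr 1
    have hc : Nat.Coprime (u : ZMod h).val h := ZMod.val_coe_unit_coprime u
    rw [← Nat.gcd_rec, Nat.gcd_comm h, Nat.Coprime.gcd_mul_left_cancel _ hc]
  · rw [← pow_mul]
    exact pow_eq_pow_mod _ hz

lemma A_const (h : ℕ) (hh : 0 < h) (a : ℕ → ℂ) (ha : ∀ k : ℕ, a k = a (Nat.gcd k h))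
    (d : ℕ) (hd : d ∣ h) (z w : ℂ) (hz : IsPrimitiveRoot z d) (hw : IsPrimitiveRoot w d) :
    ∑ k ∈ Finset.range h, a k * w ^ k = ∑ k ∈ Finset.range h, a k * z ^ k := by
  have : NeZero h := ⟨hh.ne'⟩
  have : NeZero d := ⟨(Nat.pos_of_dvd_of_pos hd hh).ne'⟩
  obtain ⟨i, hi, hc, rfl⟩ := hz.isPrimitiveRoot_iff.1 hw
  obtain ⟨u, hu⟩ := ZMod.unitsMap_surjective hd (ZMod.unitOfCoprime i hc)
  have hzh : z ^ h = 1 := (hz.pow_eq_one_iff_dvd h).2 hd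
  have : z ^ i = z ^ (u : ZMod h).val := by
    have h1 : ((i : ℕ) : ZMod d) = (((u : ZMod h).val : ℕ) : ZMod d) := by
      have := congrArg (fun v : (ZMod d)ˣ => (v : ZMod d)) hu
      simp only [ZMod.unitsMap_val, ZMod.coe_unitOfCoprime] at this
      rw [← this, ZMod.natCast_val]
    rw [ZMod.natCast_eq_natCast_iff] at h1
    rw [pow_eq_pow_mod i hz.pow_eq_one, pow_eq_pow_mod (u : ZMod h).val hz.pow_eq_one, h1]
  rw [this, A_unit h hh a ha z hzh u]

open Polynomial in
lemma sum_roots_div (n : ℕ) (hn : 0 < n) (f : ℂ → ℂ) :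
    ∑ z ∈ nthRootsFinset n (1 : ℂ), f z = ∑ d ∈ n.divisors, ∑ z ∈ primitiveRoots d ℂ, f z := by
  have : NeZero n := ⟨hn.ne'⟩
  classical
  rw [IsPrimitiveRoot.nthRoots_one_eq_biUnion_primitiveRoots,
    Finset.sum_biUnion]
  intro i _ j _ hij
  exact IsPrimitiveRoot.disjoint hij


/-- For an `h`-Cohen arithmetic function `a`, `A(q) := ∑_{k<h} a(k) q^k`,
`ε := exp(2πi/h)`, and any `q` with `q^h ≠ 1`:
`A(q)/(1 − q^h) = (1/h) ∑_{d ∣ h} A(ε^{h/d}) · ∑_{d′ ∣ d} d′ μ(d/d′)/(1 − q^{d′})`. -/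
theorem stmt_5 (h : ℕ) (hh : 0 < h)
    (ε : ℂ) (hε : ε = Complex.exp (2 * Real.pi * Complex.I / h))
    (a : ℕ → ℂ) (ha : ∀ k : ℕ, a k = a (Nat.gcd k h))
    (A : ℂ → ℂ) (hA : ∀ q : ℂ, A q = ∑ k ∈ Finset.range h, a k * q ^ k)
    (q : ℂ) (hq : q ^ h ≠ 1) :
    A q / (1 - q ^ h) =
      (1 / (h : ℂ)) * ∑ d ∈ h.divisors, A (ε ^ (h / d)) *
        ∑ d' ∈ d.divisors,
          (d' : ℂ) * ((ArithmeticFunction.moebius (d / d') : ℤ) : ℂ) /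
            (1 - q ^ d') := by
  have hne : ∀ n, n ∣ h → q ^ n ≠ 1 := by
    rintro n ⟨m, rfl⟩ hn
    exact hq (by rw [pow_mul, hn, one_pow])
  have hS : ∀ n > 0, n ∈ {n | n ∣ h} →
      (∑ d ∈ n.divisors, ∑ z ∈ primitiveRoots d ℂ, (1 - z⁻¹ * q)⁻¹) = (n : ℂ) / (1 - q ^ n) := by
    intro n hn hnh
    rw [← sum_roots_div n hn]
    have := partial_frac n hn (fun k => if k = 0 then 1 else 0) q (hne n hnh)
    simpa [hn, hn.ne'] using this
  rw [ArithmeticFunction.sum_eq_iff_sum_mul_moebius_eq_on {n | n ∣ h}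
    (fun m n hmn hn => dvd_trans hmn hn)] at hS
  have hP := partial_frac h hh a q hq
  rw [sum_roots_div h hh] at hP
  have hh0 : (h : ℂ) ≠ 0 := Nat.cast_ne_zero.2 hh.ne'
  rw [hA q, one_div, eq_inv_mul_iff_mul_eq₀ hh0, ← mul_div_assoc, ← hP]
  have hεp : IsPrimitiveRoot ε h := hε ▸ Complex.isPrimitiveRoot_exp h hh.ne'
  refine Finset.sum_congr rfl fun d hd => ?_
  have hdh := Nat.dvd_of_mem_divisors hd
  have hd0 : 0 < d := Nat.pos_of_mem_divisors hd
  have hp : IsPrimitiveRoot (ε ^ (h / d)) d :=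
    hεp.pow hh (Nat.div_mul_cancel hdh).symm
  have h2 := hS d hd0 hdh
  rw [Nat.sum_divisorsAntidiagonal' (fun x y => ((ArithmeticFunction.moebius x : ℤ) : ℂ) * ((y : ℂ) / (1 - q ^ y)))] at h2
  have h3 : ∑ d' ∈ d.divisors, (d' : ℂ) * ((ArithmeticFunction.moebius (d / d') : ℤ) : ℂ) /
            (1 - q ^ d') = ∑ z ∈ primitiveRoots d ℂ, (1 - z⁻¹ * q)⁻¹ := by
    rw [← h2]
    refine Finset.sum_congr rfl fun x _ => ?_
    ring
  rw [h3, Finset.mul_sum]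
  refine Finset.sum_congr rfl fun z hz => ?_
  rw [hA, A_const h hh a ha d hdh (ε ^ (h / d)) z hp ((mem_primitiveRoots hd0).1 hz)]
end

section
/- Let h be a positive integer and let a : ℕ → ℂ satisfy a(k) = a(gcd(k, h)) for every natural number k (with gcd(0, h) = h). Set A(q) := ∑_{k=0}^{h−1} a(k) q^k and Ψ_d(q) := ∑_{1 ≤ j ≤ d, gcd(j,d)=1} q^j. Then the polynomial identity A(q) − a(0)(1 − q^h) = ∑_{d | h} a(h/d) · Ψ_d(q^{h/d}) holds in ℂ[q]. -/
open Polynomial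

/-- For an `h`-Cohen arithmetic function `a`, with
`A(q) := ∑_{k<h} a(k) q^k` and `Ψ_d(q) := ∑_{1 ≤ j ≤ d, gcd(j,d)=1} q^j`, the identity
`A(q) − a(0)(1 − q^h) = ∑_{d ∣ h} a(h/d) Ψ_d(q^{h/d})` holds in `ℂ[q]`. -/
theorem stmt_7 (h : ℕ) (hh : 0 < h)
    (a : ℕ → ℂ) (ha : ∀ k : ℕ, a k = a (Nat.gcd k h)) :
    (∑ k ∈ Finset.range h, C (a k) * X ^ k) - C (a 0) * (1 - X ^ h) =
      ∑ d ∈ h.divisors, C (a (h / d)) *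
        ∑ j ∈ (Finset.Icc 1 d).filter (fun j => Nat.gcd j d = 1),
          (X : Polynomial ℂ) ^ (j * (h / d)) := by
  have h0 : a 0 = a h := by rw [ha 0, Nat.gcd_zero_left]
  have h1 : (∑ k ∈ Finset.range h, C (a k) * X ^ k) - C (a 0) * (1 - X ^ h) =
      ∑ k ∈ Finset.Icc 1 h, C (a k) * (X : Polynomial ℂ) ^ k := by
    have e1 := Finset.sum_range_succ (fun k => C (a k) * (X : Polynomial ℂ) ^ k) h
    have e2 := Finset.sum_range_succ' (fun k => C (a k) * (X : Polynomial ℂ) ^ k) h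
    have e3 : ∑ k ∈ Finset.Icc 1 h, C (a k) * (X : Polynomial ℂ) ^ k =
        ∑ k ∈ Finset.range h, C (a (k + 1)) * (X : Polynomial ℂ) ^ (k + 1) := by
      rw [Finset.range_eq_Ico, Finset.sum_Ico_add' (fun k => C (a k) * (X : Polynomial ℂ) ^ k)]
      rfl
    rw [e3]
    rw [e2, ← h0] at e1
    simp only [pow_zero] at e1
    linear_combination -e1
  rw [h1]
  simp_rw [Finset.mul_sum]
  rw [Finset.sum_sigma']
  have key : ∀ d j : ℕ, d ∣ h → Nat.gcd j d = 1 → Nat.gcd (j * (h / d)) h = h / d := by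
    intro d j hd hj
    obtain ⟨e, rfl⟩ := hd
    have hd0 : 0 < d := Nat.pos_of_mul_pos_right hh
    rw [Nat.mul_div_cancel_left _ hd0, Nat.gcd_mul_right, hj, one_mul]
  refine Finset.sum_bij' (fun k _ => (⟨h / Nat.gcd k h, k / Nat.gcd k h⟩ : (_ : ℕ) × ℕ))
    (fun p _ => p.2 * (h / p.1)) ?_ ?_ ?_ ?_ ?_
  · intro k hk
    rw [Finset.mem_Icc] at hk
    have hg : 0 < Nat.gcd k h := Nat.gcd_pos_of_pos_right _ hh
    simp only [Finset.mem_sigma, Nat.mem_divisors, Finset.mem_filter, Finset.mem_Icc]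
    exact ⟨⟨Nat.div_dvd_of_dvd (Nat.gcd_dvd_right k h), hh.ne'⟩,
      ⟨Nat.div_pos (Nat.le_of_dvd hk.1 (Nat.gcd_dvd_left k h)) hg,
        Nat.div_le_div_right hk.2⟩, Nat.coprime_div_gcd_div_gcd hg⟩
  · rintro ⟨d, j⟩ hp
    simp only [Finset.mem_sigma, Nat.mem_divisors, Finset.mem_filter, Finset.mem_Icc] at hp ⊢
    obtain ⟨⟨hd, -⟩, ⟨hj1, hj2⟩, hj⟩ := hp
    have hd0 : 0 < d := Nat.pos_of_dvd_of_pos hd hh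
    refine ⟨Nat.mul_pos hj1 (Nat.div_pos (Nat.le_of_dvd hh hd) hd0), ?_⟩
    calc j * (h / d) ≤ d * (h / d) := Nat.mul_le_mul_right _ hj2
      _ = h := Nat.mul_div_cancel' hd
  · intro k hk
    simp only
    rw [Nat.div_div_self (Nat.gcd_dvd_right k h) hh.ne',
      Nat.div_mul_cancel (Nat.gcd_dvd_left k h)]
  · rintro ⟨d, j⟩ hp
    simp only [Finset.mem_sigma, Nat.mem_divisors, Finset.mem_filter, Finset.mem_Icc] at hp
    obtain ⟨⟨hd, -⟩, ⟨hj1, hj2⟩, hj⟩ := hp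
    have hd0 : 0 < d := Nat.pos_of_dvd_of_pos hd hh
    simp only [key d j hd hj]
    rw [Nat.div_div_self hd hh.ne',
      Nat.mul_div_cancel _ (Nat.div_pos (Nat.le_of_dvd hh hd) hd0)]
  · intro k hk
    simp only
    rw [Nat.div_div_self (Nat.gcd_dvd_right k h) hh.ne',
      Nat.div_mul_cancel (Nat.gcd_dvd_left k h), ← ha k]
end

section
/- Let h be a positive integer and let a : ℕ → ℂ satisfy a(k) = a(gcd(k, h)) for every natural number k (with gcd(0, h) = h). Set A(q) := ∑_{k=0}^{h−1} a(k) q^k. Then for every q ∈ ℂ with q^h ≠ 1: A(q)/(1 − q^h) = ∑_{d | h} a(h/d) · ∑_{d′ | d} μ(d′) / (1 − q^{h d′/d}), where μ is the Möbius function. -/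
theorem aux_moebius (d e k : ℕ) (hd : 0 < d) (he : 0 < e) :
    ∑ x ∈ d.divisors, (if e * x ∣ k then ArithmeticFunction.moebius x else 0)
      = if Nat.gcd k (e * d) = e then 1 else 0 := by
  by_cases hek : e ∣ k
  · obtain ⟨j, rfl⟩ := hek
    have h1 : ∀ x, (e * x ∣ e * j) ↔ x ∣ j := fun x => Nat.mul_dvd_mul_iff_left he
    simp only [h1, Nat.gcd_mul_left]
    rw [← Finset.sum_filter]
    have h2 : d.divisors.filter (fun x => x ∣ j) = (Nat.gcd j d).divisors := by
      ext x
      have : Nat.gcd j d ≠ 0 := (Nat.gcd_pos_of_pos_right j hd).ne'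
      simp only [Finset.mem_filter, Nat.mem_divisors, Nat.dvd_gcd_iff]
      have := hd.ne'
      tauto
    rw [h2, ← ArithmeticFunction.coe_mul_zeta_apply, ArithmeticFunction.moebius_mul_coe_zeta,
      ArithmeticFunction.one_apply]
    have h3 : e * Nat.gcd j d = e ↔ Nat.gcd j d = 1 := by
      constructor
      · intro h; exact Nat.eq_of_mul_eq_mul_left he (by simpa using h)
      · intro h; simp [h]
    simp only [h3]
  · rw [if_neg, Finset.sum_eq_zero]
    · intro x _
      rw [if_neg]
      exact fun h => hek ((Dvd.intro _ rfl).trans h)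
    · intro h
      exact hek (h ▸ Nat.gcd_dvd_left k (e * d))

theorem aux_geom_s8 (m n : ℕ) (hm : 0 < m) (q : ℂ) (hq : q ^ (m * n) ≠ 1) :
    1 / (1 - q ^ m) = (∑ k ∈ Finset.range (m * n), if m ∣ k then q ^ k else 0)
      / (1 - q ^ (m * n)) := by
  have h1 : q ^ m ≠ 1 := fun h => hq (by rw [pow_mul, h, one_pow])
  have h2 : (∑ k ∈ Finset.range (m * n), if m ∣ k then q ^ k else 0)
      = ∑ j ∈ Finset.range n, (q ^ m) ^ j := by
    rw [← Finset.sum_filter]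
    symm
    refine Finset.sum_bij (fun j _ => m * j) ?_ ?_ ?_ ?_
    · intro j hj
      simp only [Finset.mem_filter, Finset.mem_range] at *
      exact ⟨Nat.mul_lt_mul_of_pos_left hj hm, Dvd.intro _ rfl⟩
    · intro a _ b _ h
      exact Nat.eq_of_mul_eq_mul_left hm h
    · intro b hb
      simp only [Finset.mem_filter, Finset.mem_range] at hb
      obtain ⟨hb, j, rfl⟩ := hb
      exact ⟨j, Finset.mem_range.2 (Nat.lt_of_mul_lt_mul_left hb), rfl⟩
    · intro j _
      rw [pow_mul]
  have h3 : 1 - q ^ m ≠ 0 := sub_ne_zero.2 h1.symm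
  have h4 : 1 - q ^ (m * n) ≠ 0 := sub_ne_zero.2 hq.symm
  rw [h2, div_eq_div_iff h3 h4, one_mul, pow_mul, geom_sum_mul_neg]

theorem aux_inner (e d : ℕ) (hd : 0 < d) (he : 0 < e) (q : ℂ) (hq : q ^ (e * d) ≠ 1) :
    ∑ x ∈ d.divisors, ((ArithmeticFunction.moebius x : ℤ) : ℂ) / (1 - q ^ (e * d * x / d))
      = (∑ k ∈ Finset.range (e * d), if Nat.gcd k (e * d) = e then q ^ k else 0)
        / (1 - q ^ (e * d)) := by
  have h1 : ∀ x ∈ d.divisors,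
      ((ArithmeticFunction.moebius x : ℤ) : ℂ) / (1 - q ^ (e * d * x / d))
      = (∑ k ∈ Finset.range (e * d),
          (((if e * x ∣ k then ArithmeticFunction.moebius x else 0 : ℤ)) : ℂ) * q ^ k)
        / (1 - q ^ (e * d)) := by
    intro x hx
    obtain ⟨y, hy⟩ := Nat.dvd_of_mem_divisors hx
    have hx0 : 0 < x := Nat.pos_of_mem_divisors hx
    have e1 : e * d * x / d = e * x := by
      rw [mul_right_comm, Nat.mul_div_cancel _ hd]
    have e2 : e * d = e * x * y := by rw [hy, mul_assoc]
    have := aux_geom_s8 (e * x) y (Nat.mul_pos he hx0) q (e2 ▸ hq)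
    rw [e1, div_eq_mul_one_div, this, ← e2, ← mul_div_assoc, Finset.mul_sum]
    congr 1
    refine Finset.sum_congr rfl fun k _ => ?_
    split_ifs <;> simp
  rw [Finset.sum_congr rfl h1, ← Finset.sum_div, Finset.sum_comm]
  congr 1
  refine Finset.sum_congr rfl fun k _ => ?_
  rw [← Finset.sum_mul, ← Int.cast_sum, aux_moebius d e k hd he]
  split_ifs <;> simp


/-- For an `h`-Cohen arithmetic function `a`, `A(q) := ∑_{k<h} a(k) q^k`,
and any `q` with `q^h ≠ 1`:
`A(q)/(1 − q^h) = ∑_{d ∣ h} a(h/d) · ∑_{d′ ∣ d} μ(d′)/(1 − q^{h d′/d})`. -/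
theorem stmt_8 (h : ℕ) (hh : 0 < h)
    (a : ℕ → ℂ) (ha : ∀ k : ℕ, a k = a (Nat.gcd k h))
    (A : ℂ → ℂ) (hA : ∀ q : ℂ, A q = ∑ k ∈ Finset.range h, a k * q ^ k)
    (q : ℂ) (hq : q ^ h ≠ 1) :
    A q / (1 - q ^ h) =
      ∑ d ∈ h.divisors, a (h / d) *
        ∑ d' ∈ d.divisors,
          ((ArithmeticFunction.moebius d' : ℤ) : ℂ) / (1 - q ^ (h * d' / d)) := by
  have h1 : ∀ d ∈ h.divisors, a (h / d) *
        ∑ d' ∈ d.divisors,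
          ((ArithmeticFunction.moebius d' : ℤ) : ℂ) / (1 - q ^ (h * d' / d))
      = (∑ k ∈ Finset.range h, if Nat.gcd k h = h / d then a k * q ^ k else 0)
        / (1 - q ^ h) := by
    intro d hd
    have hd0 : 0 < d := Nat.pos_of_mem_divisors hd
    have hdv := Nat.dvd_of_mem_divisors hd
    have e1 : h / d * d = h := Nat.div_mul_cancel hdv
    have he : 0 < h / d := Nat.div_pos (Nat.le_of_dvd hh hdv) hd0
    have := aux_inner (h / d) d hd0 he q (by rw [e1]; exact hq)
    rw [e1] at this
    rw [this, ← mul_div_assoc, Finset.mul_sum]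
    congr 1
    refine Finset.sum_congr rfl fun k _ => ?_
    split_ifs with hk
    · rw [ha k, hk]
    · simp
  rw [Finset.sum_congr rfl h1, ← Finset.sum_div, Finset.sum_comm, hA]
  congr 1
  refine Finset.sum_congr rfl fun k _ => ?_
  rw [Nat.sum_div_divisors h (fun e => if Nat.gcd k h = e then a k * q ^ k else 0),
    Finset.sum_ite_eq, if_pos]
  exact Nat.mem_divisors.2 ⟨Nat.gcd_dvd_right k h, hh.ne'⟩
end

section
/- Let h be a positive integer and e : ℕ → ℤ a function vanishing off the divisors of h. Write e⁺(d) := max(e(d), 0) and e⁻(d) := max(−e(d), 0). Suppose P ∈ ℂ[X] is a nonzero polynomial satisfying P(X) · ∏_{d | h} (X^d − 1)^{e⁻(d)} = ∏_{d | h} (X^d − 1)^{e⁺(d)}. Then for every natural number k, the multiplicity of exp(2πik/h) as a root of P equals ∑_{d | gcd(k, h)} e(h/d) (with gcd(0, h) = h). -/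
open Polynomial


lemma X_pow_sub_one_ne_zero_aux (d : ℕ) (hd : d ≠ 0) : ((X : Polynomial ℂ) ^ d - 1) ≠ 0 := by
  simpa using X_pow_sub_C_ne_zero (R := ℂ) (Nat.pos_of_ne_zero hd) 1

lemma aux_one (d : ℕ) (hd : d ≠ 0) (z : ℂ) :
    ((X : Polynomial ℂ) ^ d - 1).rootMultiplicity z = if z ^ d = 1 then 1 else 0 := by
  classical
  have hne : ((X : Polynomial ℂ) ^ d - 1) ≠ 0 := X_pow_sub_one_ne_zero_aux d hd
  split_ifs with hz
  · have hs : ((X : Polynomial ℂ) ^ d - 1).Separable := by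
      have := separable_X_pow_sub_C (F := ℂ) (n := d) 1 (by exact_mod_cast hd) one_ne_zero
      simpa using this
    have h1 := rootMultiplicity_le_one_of_separable hs z
    have h2 : 0 < ((X : Polynomial ℂ) ^ d - 1).rootMultiplicity z := by
      rw [rootMultiplicity_pos hne]; simp [IsRoot, hz]
    omega
  · apply rootMultiplicity_eq_zero
    simpa [IsRoot, sub_eq_zero] using hz

lemma aux_prod_s9 (s : Finset ℕ) (hs : ∀ d ∈ s, d ≠ 0) (f : ℕ → ℕ) (z : ℂ) :
    (∏ d ∈ s, ((X : Polynomial ℂ) ^ d - 1) ^ f d) ≠ 0 ∧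
    (∏ d ∈ s, ((X : Polynomial ℂ) ^ d - 1) ^ f d).rootMultiplicity z =
      ∑ d ∈ s, f d * if z ^ d = 1 then 1 else 0 := by
  classical
  have hne : (∏ d ∈ s, ((X : Polynomial ℂ) ^ d - 1) ^ f d) ≠ 0 :=
    Finset.prod_ne_zero_iff.2 fun d hd => pow_ne_zero _ (X_pow_sub_one_ne_zero_aux d (hs d hd))
  refine ⟨hne, ?_⟩
  rw [← count_roots, roots_prod _ _ hne, Multiset.count_bind]
  change ∑ d ∈ s, _ = _
  refine Finset.sum_congr rfl fun d hd => ?_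
  rw [roots_pow, Multiset.count_nsmul, count_roots, aux_one d (hs d hd)]

/-- Let `e : ℕ → ℤ` vanish off the divisors of `h` and write
`e⁺(d) = max(e(d),0)`, `e⁻(d) = max(−e(d),0)`. If a nonzero `P ∈ ℂ[X]` satisfies
`P · ∏_{d ∣ h} (X^d − 1)^{e⁻(d)} = ∏_{d ∣ h} (X^d − 1)^{e⁺(d)}`
(i.e. `P = ∏_{d ∣ h} (X^d − 1)^{e(d)}` as a rational function), then for every `k`,
the multiplicity of `exp(2πik/h)` as a root of `P` equals `∑_{d ∣ gcd(k,h)} e(h/d)`. -/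
theorem stmt_9 (h : ℕ) (hh : 0 < h) (e : ℕ → ℤ)
    (he : ∀ d : ℕ, d ∉ h.divisors → e d = 0)
    (P : Polynomial ℂ) (hP : P ≠ 0)
    (hfac : P * ∏ d ∈ h.divisors, ((X : Polynomial ℂ) ^ d - 1) ^ (-e d).toNat =
      ∏ d ∈ h.divisors, ((X : Polynomial ℂ) ^ d - 1) ^ (e d).toNat) :
    ∀ k : ℕ,
      (P.rootMultiplicity (Complex.exp (2 * Real.pi * Complex.I * k / h)) : ℤ) =
        ∑ d ∈ (Nat.gcd k h).divisors, e (h / d) := by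
  intro k
  set z := Complex.exp (2 * Real.pi * Complex.I * k / h) with hz
  have hzk : z = Complex.exp (2 * Real.pi * Complex.I / h) ^ k := by
    rw [hz, ← Complex.exp_nat_mul]; congr 1; ring
  have hprim := Complex.isPrimitiveRoot_exp h hh.ne'
  have hz1 : ∀ d, z ^ d = 1 ↔ h ∣ k * d := fun d => by
    rw [hzk, ← pow_mul, hprim.pow_eq_one_iff_dvd]
  have hd0 : ∀ d ∈ h.divisors, d ≠ 0 := fun d hd => (Nat.pos_of_mem_divisors hd).ne'
  obtain ⟨hn1, hm1⟩ := aux_prod_s9 h.divisors hd0 (fun d => (-e d).toNat) z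
  obtain ⟨hn2, hm2⟩ := aux_prod_s9 h.divisors hd0 (fun d => (e d).toNat) z
  have key := congrArg (rootMultiplicity z) hfac
  rw [rootMultiplicity_mul (mul_ne_zero hP hn1), hm1, hm2] at key
  have key2 : (P.rootMultiplicity z : ℤ) =
      ∑ d ∈ h.divisors, e d * if z ^ d = 1 then 1 else 0 := by
    zify at key
    rw [← eq_sub_iff_add_eq, ← Finset.sum_sub_distrib] at key
    rw [key]
    refine Finset.sum_congr rfl fun d _ => ?_
    rw [← sub_mul]
    congr 1
    omega
  rw [key2, ← Nat.sum_div_divisors h (fun d => e d * if z ^ d = 1 then 1 else 0)]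
  have hdiv : (Nat.gcd k h).divisors = h.divisors.filter (fun d => d ∣ k) := by
    ext d
    simp [Nat.dvd_gcd_iff, hh.ne', and_comm]
  rw [hdiv, Finset.sum_filter]
  refine Finset.sum_congr rfl fun d hd => ?_
  have hdh := Nat.dvd_of_mem_divisors hd
  have : z ^ (h / d) = 1 ↔ d ∣ k := by
    rw [hz1]
    obtain ⟨c, rfl⟩ := hdh
    have hdp := Nat.pos_of_mem_divisors hd
    have hc : 0 < c := Nat.pos_of_mul_pos_left hh
    rw [Nat.mul_div_cancel_left _ hdp, Nat.mul_dvd_mul_iff_right hc]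
  simp [this]
end

section
/- Let h ≥ 2 be an integer and ε := exp(2πi/h) ∈ ℂ. Let m : ℕ → ℕ satisfy m(k) = m(gcd(k, h)) for every k ≥ 1 together with m(h) = 0 and m(0) = 0. Set n := ∑_{k=1}^{h−1} m(k), E(q) := ∑_{k=1}^{h−1} m(k) q^k, and p(j) := ∑_{k=1}^{h−1} m(k) ε^{kj} (so p(j) = E(ε^j) and p(0) = n). Then for every q ∈ ℂ with q^h ≠ 1: (n − E(q))/(1 − q^h) = (1/h) ∑_{k=1}^{h−1} ε^k (n − p(k)) / (ε^k − q). -/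
theorem aux_pf (h : ℕ) (hh : 2 ≤ h) (ε : ℂ) (hε : IsPrimitiveRoot ε h)
    (q : ℂ) (hq : q ^ h ≠ 1) (j : ℕ) (hj : j < h) :
    ∑ k ∈ Finset.range h, ε ^ k * ε ^ (j * k) / (ε ^ k - q) = h * q ^ j / (1 - q ^ h) := by
  have hq' : 1 - q ^ h ≠ 0 := fun e => hq (by linear_combination -e)
  have key : ∀ k ∈ Finset.range h, ε ^ k * ε ^ (j * k) / (ε ^ k - q) =
      (∑ i ∈ Finset.range h, q ^ i * (ε ^ (j + h - i)) ^ k) / (1 - q ^ h) := by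
    intro k _
    have hk : (ε ^ k) ^ h = 1 := by
      rw [← pow_mul, mul_comm, pow_mul, hε.pow_eq_one, one_pow]
    have hne : ε ^ k - q ≠ 0 := by
      intro e
      apply hq
      rw [← sub_eq_zero.mp e, hk]
    rw [div_eq_div_iff hne hq']
    have g := geom_sum₂_mul q (ε ^ k) h
    rw [hk] at g
    have : (∑ i ∈ Finset.range h, q ^ i * (ε ^ (j + h - i)) ^ k) =
        ε ^ k * ε ^ (j * k) * ∑ i ∈ Finset.range h, q ^ i * (ε ^ k) ^ (h - 1 - i) := by
      rw [Finset.mul_sum]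
      refine Finset.sum_congr rfl fun i hi => ?_
      have hi' := Finset.mem_range.mp hi
      have e : j + h - i = 1 + j + (h - 1 - i) := by omega
      rw [e]
      ring
    rw [this]
    linear_combination ε ^ k * ε ^ (j * k) * g
  rw [Finset.sum_congr rfl key, ← Finset.sum_div, Finset.sum_comm]
  congr 1
  rw [Finset.sum_eq_single j]
  · rw [← Finset.mul_sum, Nat.add_sub_cancel_left, hε.pow_eq_one]
    simp [mul_comm]
  · intro i hi hij
    have hi' := Finset.mem_range.mp hi
    rw [← Finset.mul_sum]
    have hx : ε ^ (j + h - i) ≠ 1 := by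
      intro e
      obtain ⟨c, hc⟩ := (hε.pow_eq_one_iff_dvd _).mp e
      have h1 : 0 < h * c := by omega
      have h2 : h * c < h * 2 := by omega
      have h3 : c < 2 := Nat.lt_of_mul_lt_mul_left h2
      have h4 : 0 < c := Nat.pos_of_mul_pos_left h1
      obtain rfl : c = 1 := by omega
      omega
    have h5 : (ε ^ (j + h - i)) ^ h = 1 := by
      rw [← pow_mul, mul_comm, pow_mul, hε.pow_eq_one, one_pow]
    rw [geom_sum_eq hx, h5]
    simp
  · intro hn
    exact absurd (Finset.mem_range.mpr hj) hn

/-- Let `h ≥ 2`, `ε := exp(2πi/h)`, and let `m : ℕ → ℕ` be an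
`h`-Cohen function with `m(0) = m(h) = 0`. With `n := ∑_{k=1}^{h−1} m(k)`,
`E(q) := ∑_{k=1}^{h−1} m(k) q^k` and `p(j) := ∑_{k=1}^{h−1} m(k) ε^{kj}`, for every
`q` with `q^h ≠ 1`:
`(n − E(q))/(1 − q^h) = (1/h) ∑_{k=1}^{h−1} ε^k (n − p(k))/(ε^k − q)`. -/
theorem stmt_11 (h : ℕ) (hh : 2 ≤ h)
    (ε : ℂ) (hε : ε = Complex.exp (2 * Real.pi * Complex.I / h))
    (m : ℕ → ℕ) (hm : ∀ k : ℕ, 1 ≤ k → m k = m (Nat.gcd k h))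
    (hmh : m h = 0) (hm0 : m 0 = 0)
    (n : ℕ) (hn : n = ∑ k ∈ Finset.Icc 1 (h - 1), m k)
    (E : ℂ → ℂ) (hE : ∀ q : ℂ, E q = ∑ k ∈ Finset.Icc 1 (h - 1), (m k : ℂ) * q ^ k)
    (p : ℕ → ℂ) (hp : ∀ j : ℕ, p j = ∑ k ∈ Finset.Icc 1 (h - 1), (m k : ℂ) * ε ^ (k * j))
    (q : ℂ) (hq : q ^ h ≠ 1) :
    ((n : ℂ) - E q) / (1 - q ^ h) =
      (1 / (h : ℂ)) * ∑ k ∈ Finset.Icc 1 (h - 1),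
        ε ^ k * ((n : ℂ) - p k) / (ε ^ k - q) := by
  have hprim : IsPrimitiveRoot ε h := by
    rw [hε]
    exact Complex.isPrimitiveRoot_exp h (by omega)
  have hh0 : (h : ℂ) ≠ 0 := by
    exact_mod_cast (by omega : h ≠ 0)
  have hn' : (n : ℂ) = ∑ k ∈ Finset.Icc 1 (h - 1), (m k : ℂ) := by
    rw [hn]; push_cast; rfl
  have hp0 : p 0 = n := by rw [hp, hn']; simp
  have hI : ∑ k ∈ Finset.Icc 1 (h - 1), ε ^ k * ((n : ℂ) - p k) / (ε ^ k - q) =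
      ∑ k ∈ Finset.range h, ε ^ k * ((n : ℂ) - p k) / (ε ^ k - q) := by
    refine Finset.sum_subset ?_ ?_
    · intro k hk
      rw [Finset.mem_Icc] at hk
      rw [Finset.mem_range]; omega
    · intro k hk hk'
      rw [Finset.mem_range] at hk
      rw [Finset.mem_Icc] at hk'
      obtain rfl : k = 0 := by omega
      rw [hp0]; simp
  have hS : ∑ k ∈ Finset.range h, ε ^ k * ((n : ℂ) - p k) / (ε ^ k - q) =
      ∑ j ∈ Finset.Icc 1 (h - 1), (m j : ℂ) * (h * q ^ 0 / (1 - q ^ h) - h * q ^ j / (1 - q ^ h)) := by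
    have : ∀ j ∈ Finset.Icc 1 (h - 1),
        (m j : ℂ) * (h * q ^ 0 / (1 - q ^ h) - h * q ^ j / (1 - q ^ h)) =
        ∑ k ∈ Finset.range h, (m j : ℂ) * (ε ^ k * ε ^ (0 * k) / (ε ^ k - q) -
          ε ^ k * ε ^ (j * k) / (ε ^ k - q)) := by
      intro j hj
      rw [Finset.mem_Icc] at hj
      rw [← aux_pf h hh ε hprim q hq j (by omega), ← aux_pf h hh ε hprim q hq 0 (by omega),
        ← Finset.sum_sub_distrib, Finset.mul_sum]
    rw [Finset.sum_congr rfl this, Finset.sum_comm]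
    refine Finset.sum_congr rfl fun k _ => ?_
    rw [hn', hp, ← Finset.sum_sub_distrib, Finset.mul_sum, Finset.sum_div]
    refine Finset.sum_congr rfl fun j _ => ?_
    ring
  rw [hI, hS, hE, hn', ← Finset.sum_sub_distrib, Finset.sum_div, Finset.mul_sum]
  refine Finset.sum_congr rfl fun j _ => ?_
  field_simp
  try ring
end

section
/- Let h ≥ 2 be an integer. Let m : ℕ → ℕ satisfy m(k) = m(gcd(k, h)) for every k ≥ 1 together with m(h) = 0 and m(0) = 0, and set n := ∑_{k=1}^{h−1} m(k) and E(q) := ∑_{k=1}^{h−1} m(k) q^k. Then the polynomial identity n − E(q) = ∑_{d | h, d > 1} m(h/d) · ( φ(d) − Ψ_d(q^{h/d}) ) holds in ℂ[q], where φ is Euler's totient function and Ψ_d(q) := ∑_{1 ≤ j ≤ d, gcd(j,d)=1} q^j. -/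
open Polynomial

/-- Let `h ≥ 2` and let `m : ℕ → ℕ` be an `h`-Cohen function with
`m(0) = m(h) = 0`. With `n := ∑_{k=1}^{h−1} m(k)`, `E(q) := ∑_{k=1}^{h−1} m(k) q^k`
and `Ψ_d(q) := ∑_{1 ≤ j ≤ d, gcd(j,d)=1} q^j`, the identity
`n − E(q) = ∑_{d ∣ h, d > 1} m(h/d) (φ(d) − Ψ_d(q^{h/d}))` holds in `ℂ[q]`. -/
theorem stmt_12 (h : ℕ) (hh : 2 ≤ h)
    (m : ℕ → ℕ) (hm : ∀ k : ℕ, 1 ≤ k → m k = m (Nat.gcd k h))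
    (hmh : m h = 0) (hm0 : m 0 = 0)
    (n : ℕ) (hn : n = ∑ k ∈ Finset.Icc 1 (h - 1), m k) :
    (C (n : ℂ)) - ∑ k ∈ Finset.Icc 1 (h - 1), C ((m k : ℂ)) * X ^ k =
      ∑ d ∈ h.divisors.filter (fun d => 1 < d), C ((m (h / d) : ℂ)) *
        (C ((d.totient : ℂ)) -
          ∑ j ∈ (Finset.Icc 1 d).filter (fun j => Nat.gcd j d = 1),
            (X : Polynomial ℂ) ^ (j * (h / d))) := by
  have key : ∀ d : ℕ, (C ((d.totient : ℂ)) : Polynomial ℂ) =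
      ∑ j ∈ (Finset.Icc 1 d).filter (fun j => Nat.gcd j d = 1), (1 : Polynomial ℂ) := by
    intro d
    have h1 : ((Finset.Icc 1 d).filter (fun j => Nat.gcd j d = 1)).card = d.totient := by
      rw [← Nat.filter_coprime_Ico_eq_totient d 1]
      congr 1
      ext x
      simp only [Finset.mem_filter, Finset.mem_Icc, Finset.mem_Ico, Nat.coprime_iff_gcd_eq_one,
        Nat.gcd_comm x d]
      constructor
      · rintro ⟨⟨a, b⟩, c⟩
        exact ⟨⟨a, by omega⟩, c⟩
      · rintro ⟨⟨a, b⟩, c⟩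
        exact ⟨⟨a, by omega⟩, c⟩
    rw [Finset.sum_const, h1]
    simp
  have hl : (C (n : ℂ)) - ∑ k ∈ Finset.Icc 1 (h - 1), C ((m k : ℂ)) * X ^ k =
      ∑ k ∈ Finset.Icc 1 (h - 1), C ((m k : ℂ)) * (1 - (X : Polynomial ℂ) ^ k) := by
    rw [hn]
    simp only [mul_sub, mul_one, Finset.sum_sub_distrib]
    congr 1
    push_cast
    simp
  rw [hl]
  simp only [key, ← Finset.sum_sub_distrib, Finset.mul_sum]
  rw [Finset.sum_sigma']
  have hgcd : ∀ d j : ℕ, d ∣ h → Nat.gcd j d = 1 → Nat.gcd (j * (h / d)) h = h / d := by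
    intro d j hd hj
    conv_lhs => rw [← Nat.mul_div_cancel' hd]
    obtain ⟨e, rfl⟩ := hd
    have hd0 : 0 < d := by
      rcases Nat.eq_zero_or_pos d with h0 | h0
      · subst h0; omega
      · exact h0
    rw [Nat.mul_div_cancel_left _ hd0, Nat.mul_div_cancel_left _ hd0, Nat.gcd_mul_right, hj,
      one_mul]
  refine Finset.sum_bij' (fun k _ => (⟨h / Nat.gcd k h, k / Nat.gcd k h⟩ : (_ : ℕ) × ℕ))
    (fun p _ => p.2 * (h / p.1)) ?_ ?_ ?_ ?_ ?_
  · intro k hk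
    rw [Finset.mem_Icc] at hk
    have hg : 0 < Nat.gcd k h := Nat.gcd_pos_of_pos_left _ hk.1
    have hgk : Nat.gcd k h ≤ k := Nat.gcd_le_left _ hk.1
    simp only [Finset.mem_sigma, Finset.mem_filter, Nat.mem_divisors, Finset.mem_Icc]
    refine ⟨⟨⟨Nat.div_dvd_of_dvd (Nat.gcd_dvd_right _ _), by omega⟩, ?_⟩,
      ⟨Nat.div_pos hgk hg, Nat.div_le_div_right (by omega)⟩, Nat.coprime_div_gcd_div_gcd hg⟩
    obtain ⟨e, he⟩ := Nat.gcd_dvd_right k h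
    have : h / Nat.gcd k h = e := Nat.div_eq_of_eq_mul_right hg he
    rw [this]
    by_contra hc
    have : e = 0 ∨ e = 1 := by omega
    rcases this with h0 | h0 <;> rw [h0] at he <;> omega
  · rintro ⟨d, j⟩ hp
    simp only [Finset.mem_sigma, Finset.mem_filter, Nat.mem_divisors, Finset.mem_Icc] at hp ⊢
    obtain ⟨⟨⟨hd, _⟩, hd1⟩, ⟨hj1, hjd⟩, hj⟩ := hp
    have hpos : 0 < h / d := Nat.div_pos (Nat.le_of_dvd (by omega) hd) (by omega)
    have hlt : j < d := by
      rcases Nat.lt_or_ge j d with h0 | h0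
      · exact h0
      · have : j = d := by omega
        subst this
        rw [Nat.gcd_self] at hj
        omega
    have h1 : j * (h / d) < d * (h / d) := Nat.mul_lt_mul_of_pos_right hlt hpos
    rw [Nat.mul_div_cancel' hd] at h1
    have h2 : 0 < j * (h / d) := Nat.mul_pos hj1 hpos
    omega
  · intro k hk
    have h1 : h / (h / Nat.gcd k h) = Nat.gcd k h :=
      Nat.div_div_self (Nat.gcd_dvd_right _ _) (by omega)
    simp only [h1]
    exact Nat.div_mul_cancel (Nat.gcd_dvd_left _ _)
  · rintro ⟨d, j⟩ hp
    simp only [Finset.mem_sigma, Finset.mem_filter, Nat.mem_divisors, Finset.mem_Icc] at hp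
    obtain ⟨⟨⟨hd, _⟩, hd1⟩, ⟨hj1, hjd⟩, hj⟩ := hp
    have hpos : 0 < h / d := Nat.div_pos (Nat.le_of_dvd (by omega) hd) (by omega)
    simp only [hgcd d j hd hj]
    rw [Nat.div_div_self hd (by omega), Nat.mul_div_cancel _ hpos]
  · intro k hk
    rw [Finset.mem_Icc] at hk
    have h1 : h / (h / Nat.gcd k h) = Nat.gcd k h :=
      Nat.div_div_self (Nat.gcd_dvd_right _ _) (by omega)
    simp only [h1]
    rw [Nat.div_mul_cancel (Nat.gcd_dvd_left _ _), ← hm k hk.1]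
end

section
/- Let h be a positive integer and let a : ℕ → ℂ be h-periodic (a(k + h) = a(k) for all k). Then the following are equivalent: (i) a(k) = a(gcd(k, h)) for every k ≥ 1; (ii) there exists a function l : ℕ → ℂ such that the polynomial identity ∑_{k=0}^{h−1} a(k) q^k = ∑_{d | h} l(d) · ∑_{j=0}^{h/d − 1} q^{jd} holds in ℂ[q]. -/
open Polynomial

lemma aux_sum (h d : ℕ) (hh : 0 < h) (hd : d ∣ h) :
    ∑ j ∈ Finset.range (h / d), (X : Polynomial ℂ) ^ (j * d) =
      ∑ k ∈ Finset.range h, if d ∣ k then (X : Polynomial ℂ) ^ k else 0 := by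
  have hd0 : 0 < d := Nat.pos_of_dvd_of_pos hd hh
  rw [← Finset.sum_filter]
  refine Finset.sum_bij (fun j _ => j * d) ?_ ?_ ?_ ?_
  · intro j hj
    simp only [Finset.mem_range, Finset.mem_filter] at hj ⊢
    exact ⟨(Nat.lt_div_iff_mul_lt_of_dvd hd0.ne' hd).1 hj, Dvd.intro_left j rfl⟩
  · intro i _ j _ hij
    exact Nat.eq_of_mul_eq_mul_right hd0 hij
  · intro k hk
    simp only [Finset.mem_range, Finset.mem_filter] at hk
    obtain ⟨hk, c, rfl⟩ := hk
    refine ⟨c, ?_, Nat.mul_comm _ _⟩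
    rw [Finset.mem_range, Nat.lt_div_iff_mul_lt_of_dvd hd0.ne' hd, Nat.mul_comm]
    exact hk
  · intro _ _; rfl

lemma aux_poly (h : ℕ) (hh : 0 < h) (l : ℕ → ℂ) :
    ∑ d ∈ h.divisors, C (l d) *
      ∑ j ∈ Finset.range (h / d), (X : Polynomial ℂ) ^ (j * d) =
    ∑ k ∈ Finset.range h, C (∑ d ∈ (Nat.gcd k h).divisors, l d) * X ^ k := by
  have h1 : ∀ d ∈ h.divisors, C (l d) *
      ∑ j ∈ Finset.range (h / d), (X : Polynomial ℂ) ^ (j * d) =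
      ∑ k ∈ Finset.range h, if d ∣ k then C (l d) * (X : Polynomial ℂ) ^ k else 0 := by
    intro d hd
    rw [aux_sum h d hh (Nat.dvd_of_mem_divisors hd), Finset.mul_sum]
    simp only [mul_ite, mul_zero]
  rw [Finset.sum_congr rfl h1, Finset.sum_comm]
  refine Finset.sum_congr rfl fun k _ => ?_
  rw [← Finset.sum_filter, map_sum, Finset.sum_mul]
  refine Finset.sum_congr ?_ fun _ _ => rfl
  ext d
  have : Nat.gcd k h ≠ 0 := (Nat.gcd_pos_of_pos_right k hh).ne'
  simp only [Finset.mem_filter, Nat.mem_divisors, Nat.dvd_gcd_iff]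
  constructor
  · rintro ⟨⟨x, _⟩, y⟩; exact ⟨⟨y, x⟩, this⟩
  · rintro ⟨⟨y, x⟩, _⟩; exact ⟨⟨x, hh.ne'⟩, y⟩


/-- For an `h`-periodic function `a : ℕ → ℂ`, the following are
equivalent: (i) `a(k) = a(gcd(k,h))` for all `k ≥ 1` (`a` is an `h`-Cohen function);
(ii) there is `l : ℕ → ℂ` with `∑_{k<h} a(k) q^k = ∑_{d ∣ h} l(d) ∑_{j<h/d} q^{jd}`
in `ℂ[q]` (the Munagi decomposition has all numerators constant). -/
theorem stmt_13 (h : ℕ) (hh : 0 < h)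
    (a : ℕ → ℂ) (hper : ∀ k : ℕ, a (k + h) = a k) :
    (∀ k : ℕ, 1 ≤ k → a k = a (Nat.gcd k h)) ↔
      (∃ l : ℕ → ℂ,
        ∑ k ∈ Finset.range h, C (a k) * X ^ k =
          ∑ d ∈ h.divisors, C (l d) *
            ∑ j ∈ Finset.range (h / d), (X : Polynomial ℂ) ^ (j * d)) := by
  have hmod : ∀ k, a (k % h) = a k := fun k =>
    Function.Periodic.map_mod_nat (f := a) (a := h) hper k
  constructor
  · intro hi
    have hi' : ∀ k, a k = a (Nat.gcd k h) := by
      intro k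
      rcases Nat.eq_zero_or_pos k with rfl | hk
      · have := hper 0
        simpa using this.symm
      · exact hi k hk
    have hm := (ArithmeticFunction.sum_eq_iff_sum_mul_moebius_eq (R := ℂ) (g := a)).2
      (fun n _ => rfl)
    refine ⟨fun i => ∑ x ∈ i.divisorsAntidiagonal, (ArithmeticFunction.moebius x.1 : ℂ) * a x.2, ?_⟩
    · rw [aux_poly h hh]
      refine Finset.sum_congr rfl fun k _ => ?_
      rw [hm _ (Nat.gcd_pos_of_pos_right k hh), ← hi' k]
  · rintro ⟨l, hl⟩
    rw [aux_poly h hh] at hl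
    have key : ∀ k, a k = ∑ d ∈ (Nat.gcd k h).divisors, l d := by
      intro k
      have hk : k % h < h := Nat.mod_lt k hh
      have := congrArg (fun p => Polynomial.coeff p (k % h)) hl
      simp only [finsetSum_coeff, coeff_C_mul_X_pow, Finset.sum_ite_eq, Finset.mem_range, hk,
        if_true] at this
      rw [hmod, ← Nat.gcd_rec, Nat.gcd_comm] at this
      exact this
    intro k _
    rw [key k, key (Nat.gcd k h), Nat.gcd_assoc, Nat.gcd_self]
end

section
/- Let h ≥ 4 be an integer, n ∈ ℂ, and b₁, …, b_{h−1} ∈ ℂ with b₁ = n, b₂ = n − 1 and b_{h−1} = 1. Suppose that for each divisor d of h there is a polynomial E_d ∈ ℂ[q] with deg E_d < φ(d) such that ∑_{k=1}^{h−1} b_k q^{k−1} = ∑_{d | h} E_d(q) · ∑_{j=0}^{h/d − 1} q^{jd} in ℂ[q]. Then: (a) E₁ = 0; (b) ∑_{d | h} E_d(0) = n; (c) ∑_{d | h} (coefficient of q in E_d) = n − 1; and (d) ∑_{d | h, d prime} (coefficient of q^{φ(d)−1} in E_d) = 1. -/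
open Polynomial

theorem aux_coeff (P : Polynomial ℂ) (d N m : ℕ) (hd : 0 < d)
    (hP : ∀ i, d ≤ i → P.coeff i = 0) (hm : m < N * d) :
    (P * ∑ j ∈ Finset.range N, (X : Polynomial ℂ) ^ (j * d)).coeff m = P.coeff (m % d) := by
  have hdm := Nat.div_add_mod m d
  have hlt := Nat.mod_lt m hd
  rw [Finset.mul_sum, finsetSum_coeff, Finset.sum_eq_single (m / d)]
  · rw [coeff_mul_X_pow', if_pos (Nat.div_mul_le_self m d)]
    congr 1
    rw [mul_comm] at hdm
    omega
  · intro j _ hj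
    rw [coeff_mul_X_pow']
    split_ifs with hle
    · apply hP
      have h1 : j ≤ m / d := (Nat.le_div_iff_mul_le hd).2 hle
      have h2 : j + 1 ≤ m / d := by omega
      have h3 := (Nat.le_div_iff_mul_le hd).1 h2
      rw [add_mul] at h3
      omega
    · rfl
  · intro hn
    exact absurd (Finset.mem_range.2 ((Nat.div_lt_iff_lt_mul hd).2 hm)) hn

/-- Let `h ≥ 4`, `n ∈ ℂ`, and `b₁, …, b_{h−1} ∈ ℂ` with `b₁ = n`,
`b₂ = n − 1`, `b_{h−1} = 1`. If for each `d ∣ h` there is `E_d ∈ ℂ[q]` with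
`deg E_d < φ(d)` and `∑_{k=1}^{h−1} b_k q^{k−1} = ∑_{d ∣ h} E_d(q) ∑_{j<h/d} q^{jd}`,
then (a) `E₁ = 0`; (b) `∑_{d ∣ h} E_d(0) = n`; (c) `∑_{d ∣ h} [q¹]E_d = n − 1`;
(d) `∑_{d ∣ h, d prime} [q^{φ(d)−1}]E_d = 1`. -/
theorem stmt_15 (h : ℕ) (hh : 4 ≤ h) (n : ℂ) (b : ℕ → ℂ)
    (hb1 : b 1 = n) (hb2 : b 2 = n - 1) (hbh : b (h - 1) = 1)
    (E : ℕ → Polynomial ℂ)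
    (hdeg : ∀ d ∈ h.divisors, (E d).degree < (d.totient : WithBot ℕ))
    (hdecomp : ∑ k ∈ Finset.Icc 1 (h - 1), C (b k) * X ^ (k - 1) =
      ∑ d ∈ h.divisors, E d * ∑ j ∈ Finset.range (h / d), (X : Polynomial ℂ) ^ (j * d)) :
    E 1 = 0 ∧
    (∑ d ∈ h.divisors, (E d).coeff 0) = n ∧
    (∑ d ∈ h.divisors, (E d).coeff 1) = n - 1 ∧
    (∑ d ∈ h.divisors.filter Nat.Prime, (E d).coeff (d.totient - 1)) = 1 := by
  have hz : ∀ d ∈ h.divisors, ∀ i, d.totient ≤ i → (E d).coeff i = 0 := by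
    intro d hd i hi
    apply coeff_eq_zero_of_degree_lt
    exact lt_of_lt_of_le (hdeg d hd) (by exact_mod_cast hi)
  have hpos : ∀ d ∈ h.divisors, 0 < d := fun d hd => Nat.pos_of_mem_divisors hd
  have hR : ∀ m, m < h → (∑ k ∈ Finset.Icc 1 (h - 1), C (b k) * X ^ (k - 1)).coeff m =
      ∑ d ∈ h.divisors, (E d).coeff (m % d) := by
    intro m hm
    rw [hdecomp, finsetSum_coeff]
    refine Finset.sum_congr rfl fun d hd => ?_
    apply aux_coeff _ _ _ _ (hpos d hd)
    · intro i hi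
      exact hz d hd i ((Nat.totient_le d).trans hi)
    · rw [Nat.div_mul_cancel (Nat.dvd_of_mem_divisors hd)]
      exact hm
  have hL : ∀ m, (∑ k ∈ Finset.Icc 1 (h - 1), C (b k) * X ^ (k - 1)).coeff m =
      if m + 1 ≤ h - 1 then b (m + 1) else 0 := by
    intro m
    rw [finsetSum_coeff]
    simp only [coeff_C_mul, coeff_X_pow]
    split_ifs with hm
    · rw [Finset.sum_eq_single (m + 1)]
      · simp
      · intro k hk hne
        rw [Finset.mem_Icc] at hk
        rw [if_neg (by omega), mul_zero]
      · intro hn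
        exact absurd (Finset.mem_Icc.2 ⟨by omega, hm⟩) hn
    · apply Finset.sum_eq_zero
      intro k hk
      rw [Finset.mem_Icc] at hk
      rw [if_neg (by omega), mul_zero]
  have hmod : ∀ r d, d ∣ h → 0 < r → r ≤ d → (h - r) % d = d - r := by
    intro r d hd hr0 hr
    obtain ⟨c, rfl⟩ := hd
    have hc : c ≠ 0 := by rintro rfl; simp at hh
    obtain ⟨c, rfl⟩ := Nat.exists_eq_succ_of_ne_zero hc
    have : d * c.succ - r = (d - r) + d * c := by
      rw [Nat.mul_succ]; omega
    rw [this, Nat.add_mul_mod_self_left, Nat.mod_eq_of_lt (by omega)]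
  have h1mem : 1 ∈ h.divisors := Nat.one_mem_divisors.2 (by omega)
  have hE1 : E 1 = 0 := by
    have e := hR (h - 1) (by omega)
    rw [hL, if_neg (by omega), Finset.sum_eq_single 1] at e
    · ext i
      rw [coeff_zero]
      rcases Nat.eq_zero_or_pos i with rfl | hi
      · simpa [Nat.mod_one] using e.symm
      · exact hz 1 h1mem i (by rw [Nat.totient_one]; exact hi)
    · intro d hd hne
      have hp := hpos d hd
      rw [hmod 1 d (Nat.dvd_of_mem_divisors hd) one_pos hp]
      apply hz d hd
      have := Nat.totient_lt d (by omega)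
      omega
    · intro hn
      exact absurd h1mem hn
  refine ⟨hE1, ?_, ?_, ?_⟩
  · have e := hR 0 (by omega)
    rw [hL, if_pos (by omega)] at e
    simpa [hb1] using e.symm
  · have e := hR 1 (by omega)
    rw [hL, if_pos (by omega)] at e
    rw [← hb2]
    refine Eq.trans ?_ e.symm
    refine Finset.sum_congr rfl fun d hd => ?_
    have hp := hpos d hd
    rcases Nat.lt_or_ge 1 d with h1 | h1
    · rw [Nat.mod_eq_of_lt h1]
    · obtain rfl : d = 1 := by omega
      simp [hE1]
  · have e := hR (h - 2) (by omega)
    rw [hL, if_pos (by omega), show h - 2 + 1 = h - 1 by omega, hbh] at e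
    rw [e, Finset.sum_filter]
    refine Finset.sum_congr rfl fun d hd => ?_
    have hp := hpos d hd
    rcases Nat.lt_or_ge 1 d with h1 | h1
    · rw [hmod 2 d (Nat.dvd_of_mem_divisors hd) two_pos h1]
      split_ifs with hpr
      · rw [Nat.totient_prime hpr, Nat.sub_sub]
      · symm
        apply hz d hd
        have h2 := Nat.totient_lt d h1
        have h3 : d.totient ≠ d - 1 := fun h4 => hpr ((Nat.totient_eq_iff_prime hp).1 h4)
        omega
    · obtain rfl : d = 1 := by omega
      simp [hE1]
end

section
/- Let h and m be integers with h ≥ 1 and 1 ≤ m ≤ h. Then ∑_{d | h, d > 1} ∑_{ζ} ζ^m/(1 − ζ) = m − (h + 1)/2, i.e. equals (2m − h − 1)/2, where for each divisor d > 1 of h the inner sum runs over all primitive d-th roots of unity ζ in ℂ. -/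
open Polynomial in
theorem aux_pow_sum (h m : ℕ) (hm1 : 1 ≤ m) (hm2 : m < h) :
    ∑ ζ ∈ nthRootsFinset h (1:ℂ), ζ ^ m = 0 := by
  have hpos : 0 < h := by omega
  have hω := Complex.isPrimitiveRoot_exp h (by omega)
  set ω := Complex.exp (2 * Real.pi * Complex.I / h) with hωd
  have hω0 : ω ≠ 0 := Complex.exp_ne_zero _
  have hωh : ω ^ h = 1 := hω.pow_eq_one
  have key : ∑ ζ ∈ nthRootsFinset h (1:ℂ), (ω * ζ) ^ m = ∑ ζ ∈ nthRootsFinset h (1:ℂ), ζ ^ m := by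
    refine Finset.sum_nbij' (fun z => ω * z) (fun z => ω⁻¹ * z) ?_ ?_ ?_ ?_ ?_
    · intro z hz
      rw [mem_nthRootsFinset hpos] at hz ⊢
      rw [mul_pow, hωh, hz, one_mul]
    · intro z hz
      rw [mem_nthRootsFinset hpos] at hz ⊢
      rw [mul_pow, inv_pow, hωh, hz, inv_one, one_mul]
    · intro z _; simp [hω0]
    · intro z _; simp [hω0]
    · intro z _; rfl
  simp only [mul_pow, ← Finset.mul_sum] at key
  have h1 : ω ^ m ≠ 1 := hω.pow_ne_one_of_pos_of_lt (by omega) hm2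
  have : (ω ^ m - 1) * ∑ ζ ∈ nthRootsFinset h (1:ℂ), ζ ^ m = 0 := by
    rw [sub_mul, key, one_mul, sub_self]
  exact (mul_eq_zero.1 this).resolve_left (sub_ne_zero.2 h1)

open Polynomial in
theorem aux_main (h m : ℕ) (hm1 : 1 ≤ m) (hm2 : m ≤ h) :
    ∑ ζ ∈ (nthRootsFinset h (1:ℂ)).erase 1, ζ ^ m / (1 - ζ) =
      (2 * (m : ℂ) - (h : ℂ) - 1) / 2 := by
  have hpos : 0 < h := by omega
  have h1mem : (1:ℂ) ∈ nthRootsFinset h (1:ℂ) := by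
    rw [mem_nthRootsFinset hpos]; simp
  have step : ∀ k : ℕ, ∑ ζ ∈ (nthRootsFinset h (1:ℂ)).erase 1, ζ ^ k / (1 - ζ) -
      ∑ ζ ∈ (nthRootsFinset h (1:ℂ)).erase 1, ζ ^ (k+1) / (1 - ζ) =
      ∑ ζ ∈ nthRootsFinset h (1:ℂ), ζ ^ k - 1 := by
    intro k
    rw [← Finset.sum_sub_distrib, ← Finset.add_sum_erase _ _ h1mem, one_pow, add_sub_cancel_left]
    refine Finset.sum_congr rfl fun z hz => ?_
    have : 1 - z ≠ 0 := sub_ne_zero.2 (Finset.ne_of_mem_erase hz).symm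
    field_simp
    ring
  induction m, hm1 using Nat.le_induction with
  | base =>
    have s0 := step 0
    have hc : ∑ ζ ∈ nthRootsFinset h (1:ℂ), ζ ^ 0 = h := by
      simp [(Complex.isPrimitiveRoot_exp h (by omega)).card_nthRootsFinset]
    have inv : ∑ ζ ∈ (nthRootsFinset h (1:ℂ)).erase 1, ζ ^ 0 / (1 - ζ) =
        ∑ ζ ∈ (nthRootsFinset h (1:ℂ)).erase 1, -(ζ ^ 1 / (1 - ζ)) := by
      have hi : ∀ z ∈ (nthRootsFinset h (1:ℂ)).erase 1, z⁻¹ ∈ (nthRootsFinset h (1:ℂ)).erase 1 := by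
        intro z hz
        rw [Finset.mem_erase, mem_nthRootsFinset hpos] at hz ⊢
        refine ⟨by simpa using hz.1, by rw [inv_pow, hz.2, inv_one]⟩
      refine Finset.sum_nbij' (fun z => z⁻¹) (fun z => z⁻¹) hi hi (by simp) (by simp) ?_
      intro z hz
      rw [Finset.mem_erase, mem_nthRootsFinset hpos] at hz
      have h0 : z ≠ 0 := by
        rintro rfl
        simp [hpos.ne'] at hz
      have h1 : 1 - z ≠ 0 := sub_ne_zero.2 hz.1.symm
      have h2 : z - 1 ≠ 0 := sub_ne_zero.2 hz.1
      have h3 : 1 - z⁻¹ = (z - 1) / z := by field_simp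
      rw [h3]
      field_simp
      ring
    rw [hc, inv, Finset.sum_neg_distrib, zero_add] at s0
    push_cast
    linear_combination (-1/2) * s0
  | succ k hk ih =>
    have s := step k
    rw [aux_pow_sum h k hk (by omega), ih (by omega)] at s
    push_cast
    linear_combination -s

/-- For integers `h ≥ 1` and `1 ≤ m ≤ h`,
`∑_{d ∣ h, d > 1} ∑_{ζ primitive d-th root of unity} ζ^m/(1 − ζ) = (2m − h − 1)/2`. -/
theorem stmt_17 (h m : ℕ) (hh : 1 ≤ h) (hm1 : 1 ≤ m) (hm2 : m ≤ h) :
    ∑ d ∈ h.divisors.filter (fun d => 1 < d),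
      ∑ ζ ∈ primitiveRoots d ℂ, ζ ^ m / (1 - ζ) =
      (2 * (m : ℂ) - (h : ℂ) - 1) / 2 := by
  rw [← aux_main h m hm1 hm2, ← Finset.sum_biUnion]
  · refine Finset.sum_congr ?_ fun _ _ => rfl
    ext z
    simp only [Finset.mem_biUnion, Finset.mem_filter, Nat.mem_divisors, Finset.mem_erase,
      Polynomial.mem_nthRootsFinset hh]
    constructor
    · rintro ⟨d, ⟨⟨hd, _⟩, h1⟩, hz⟩
      have hp := isPrimitiveRoot_of_mem_primitiveRoots hz
      exact ⟨hp.ne_one h1, (hp.pow_eq_one_iff_dvd h).2 hd⟩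
    · rintro ⟨hz, hz1⟩
      have hd := orderOf_dvd_of_pow_eq_one hz1
      have hp : 0 < orderOf z := Nat.pos_of_dvd_of_pos hd hh
      have hne : orderOf z ≠ 1 := fun e => hz (orderOf_eq_one_iff.1 e)
      exact ⟨orderOf z, ⟨⟨hd, by omega⟩, by omega⟩,
        (mem_primitiveRoots hp).2 (IsPrimitiveRoot.orderOf z)⟩
  · intro a _ b _ hab
    exact IsPrimitiveRoot.disjoint hab
end

section
/- Let h ≥ 2 be an integer, n ∈ ℂ, and b₁, …, b_h ∈ ℂ with b_h = 0 and b_k + b_{h+1−k} = n for all 1 ≤ k ≤ h. Suppose that for each divisor d of h there is a polynomial E_d ∈ ℂ[q] with deg E_d < φ(d) such that ∑_{k=1}^{h−1} b_k q^{k−1} = ∑_{d | h} E_d(q) · ∑_{j=0}^{h/d − 1} q^{jd} in ℂ[q]. For a divisor d of h write Ẽ_d(q) := ∑_i (coefficient of q^i in E_d) · q^{d−1−i}, the degree-(d−1) reversal of E_d (so Ẽ_d(q) = q^{d−1} E_d(1/q)). Then the polynomial identity n · ∑_{j=0}^{h−1} q^j = ∑_{d | h} (E_d(q) + Ẽ_d(q))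 · ∑_{j=0}^{h/d − 1} q^{jd} holds in ℂ[q]. -/
open Polynomial

lemma my_reflect_sum {ι : Type*} (N : ℕ) (s : Finset ι) (f : ι → Polynomial ℂ) :
    reflect N (∑ i ∈ s, f i) = ∑ i ∈ s, reflect N (f i) := by
  classical
  induction s using Finset.induction_on with
  | empty => simp
  | insert a s ha ih => rw [Finset.sum_insert ha, Finset.sum_insert ha, reflect_add, ih]

lemma my_reflect_range (N : ℕ) (c : ℕ → ℂ) :
    reflect (N - 1) (∑ i ∈ Finset.range N, C (c i) * X ^ i) =
      ∑ i ∈ Finset.range N, C (c i) * X ^ (N - 1 - i) := by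
  rw [my_reflect_sum]
  refine Finset.sum_congr rfl fun i hi => ?_
  rw [Finset.mem_range] at hi
  rw [reflect_C_mul_X_pow, revAt_le (by omega)]

lemma my_reflect_eq (d : ℕ) (p : Polynomial ℂ) (hp : p.degree < (d : WithBot ℕ)) :
    ∑ i ∈ Finset.range d, C (p.coeff i) * X ^ (d - 1 - i) = reflect (d - 1) p := by
  rw [← my_reflect_range]
  congr 1
  ext k
  simp only [finsetSum_coeff, coeff_C_mul_X_pow, Finset.sum_ite_eq, Finset.mem_range]
  split_ifs with hk
  · rfl
  · exact (coeff_eq_zero_of_degree_lt (lt_of_lt_of_le hp (by exact_mod_cast not_lt.mp hk))).symm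

lemma my_geom_reflect (m d : ℕ) :
    reflect (m * d - d) (∑ j ∈ Finset.range m, (X : Polynomial ℂ) ^ (j * d)) =
      ∑ j ∈ Finset.range m, (X : Polynomial ℂ) ^ (j * d) := by
  rw [my_reflect_sum, ← Finset.sum_range_reflect]
  refine Finset.sum_congr rfl fun i hi => ?_
  rw [Finset.mem_range] at hi
  obtain ⟨k, rfl⟩ : ∃ k, m = i + k + 1 := ⟨m - i - 1, by omega⟩
  have e1 : i + k + 1 - 1 - i = k := by omega
  have e2 : (i + k + 1) * d - d = i * d + k * d := by
    rw [add_mul, add_mul, one_mul]; omega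
  rw [e1, e2, ← one_mul (X ^ (k * d)), ← C_1, reflect_C_mul_X_pow, revAt_le (by omega)]
  simp

lemma my_geom_deg (m d : ℕ) :
    (∑ j ∈ Finset.range m, (X : Polynomial ℂ) ^ (j * d)).natDegree ≤ m * d - d := by
  refine natDegree_sum_le_of_forall_le _ _ fun i hi => ?_
  rw [Finset.mem_range] at hi
  rw [natDegree_X_pow]
  have : (i + 1) * d ≤ m * d := Nat.mul_le_mul_right _ hi
  rw [add_mul, one_mul] at this
  omega



/-- Let `h ≥ 2`, `n ∈ ℂ`, and `b₁, …, b_h ∈ ℂ` with `b_h = 0` and the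
symmetry `b_k + b_{h+1−k} = n` for `1 ≤ k ≤ h`. If for each `d ∣ h` there is
`E_d ∈ ℂ[q]` with `deg E_d < φ(d)` and
`∑_{k=1}^{h−1} b_k q^{k−1} = ∑_{d ∣ h} E_d(q) ∑_{j<h/d} q^{jd}`, then with
`Ẽ_d(q) := ∑_i ([q^i]E_d) q^{d−1−i}` (the degree-`(d−1)` reversal `q^{d−1}E_d(1/q)`),
the identity `n ∑_{j<h} q^j = ∑_{d ∣ h} (E_d(q) + Ẽ_d(q)) ∑_{j<h/d} q^{jd}` holds. -/
theorem stmt_18 (h : ℕ) (hh : 2 ≤ h) (n : ℂ) (b : ℕ → ℂ)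
    (hbh : b h = 0)
    (hsym : ∀ k : ℕ, 1 ≤ k → k ≤ h → b k + b (h + 1 - k) = n)
    (E : ℕ → Polynomial ℂ)
    (hdeg : ∀ d ∈ h.divisors, (E d).degree < (d.totient : WithBot ℕ))
    (hdecomp : ∑ k ∈ Finset.Icc 1 (h - 1), C (b k) * X ^ (k - 1) =
      ∑ d ∈ h.divisors, E d * ∑ j ∈ Finset.range (h / d), (X : Polynomial ℂ) ^ (j * d)) :
    C n * ∑ j ∈ Finset.range h, (X : Polynomial ℂ) ^ j =
      ∑ d ∈ h.divisors,
        (E d + ∑ i ∈ Finset.range d, C ((E d).coeff i) * X ^ (d - 1 - i)) *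
          ∑ j ∈ Finset.range (h / d), (X : Polynomial ℂ) ^ (j * d) := by

  have hB : ∑ k ∈ Finset.Icc 1 (h - 1), C (b k) * X ^ (k - 1) =
      ∑ i ∈ Finset.range h, C (b (i + 1)) * (X : Polynomial ℂ) ^ i := by
    obtain ⟨m, rfl⟩ : ∃ m, h = m + 1 := ⟨h - 1, by omega⟩
    have key := Finset.sum_Ico_add' (fun k => C (b k) * (X : Polynomial ℂ) ^ (k - 1)) 0 m 1
    simp only [Nat.add_sub_cancel, zero_add] at key
    rw [Finset.sum_range_succ, hbh, Finset.range_eq_Ico, key, C_0, zero_mul, add_zero,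
      Nat.add_sub_cancel]
    rfl
  have hd' : ∀ d ∈ h.divisors, (E d).degree < (d : WithBot ℕ) := fun d hd =>
    lt_of_lt_of_le (hdeg d hd) (by exact_mod_cast Nat.totient_le d)
  have hR : ∑ d ∈ h.divisors, (∑ i ∈ Finset.range d, C ((E d).coeff i) * X ^ (d - 1 - i)) *
          ∑ j ∈ Finset.range (h / d), (X : Polynomial ℂ) ^ (j * d) =
      ∑ i ∈ Finset.range h, C (b (i + 1)) * X ^ (h - 1 - i) := by
    rw [← my_reflect_range h (fun i => b (i + 1)), ← hB, hdecomp, my_reflect_sum]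
    refine Finset.sum_congr rfl fun d hd => ?_
    have hdvd := Nat.dvd_of_mem_divisors hd
    have hle := Nat.divisor_le hd
    have hpos := Nat.pos_of_mem_divisors hd
    have hm : h / d * d = h := Nat.div_mul_cancel hdvd
    have e : h - 1 = (d - 1) + (h / d * d - d) := by omega
    have hn : (E d).natDegree ≤ d - 1 := by
      refine natDegree_le_iff_coeff_eq_zero.2 fun k hk => coeff_eq_zero_of_degree_lt
        (lt_of_lt_of_le (hd' d hd) ?_)
      have : d ≤ k := by omega
      exact_mod_cast this
    rw [my_reflect_eq d _ (hd' d hd), e, reflect_mul _ _ hn (my_geom_deg _ _), my_geom_reflect]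
  simp only [add_mul, Finset.sum_add_distrib]
  rw [hR, ← hdecomp, hB, ← Finset.sum_range_reflect (fun i => C (b (i + 1)) * X ^ (h - 1 - i)),
    ← Finset.sum_add_distrib, Finset.mul_sum]
  refine Finset.sum_congr rfl fun i hi => ?_
  rw [Finset.mem_range] at hi
  have e1 : h - 1 - (h - 1 - i) = i := by omega
  have e2 : h - 1 - i + 1 = h + 1 - (i + 1) := by omega
  rw [e1, e2, ← add_mul, ← C_add, hsym _ (by omega) (by omega)]
end
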